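/- arXiv:0902.2003 — 4 statements merged into one kernel-verified Lean document; each statement's English description precedes it below -/
import Mathlib

section
/- Let α = (α_1,…,α_n), β = (β_1,…,β_n) be tuples of real numbers such that α_i − β_{i'} ∉ ℤ for all i, i'. Let A_1,…,A_{n_A} be the distinct values among e^{2πiα_1},…,e^{2πiα_n}, with m_{A_j} = #{i : e^{2πiα_i} = A_j}, so that Σ_j m_{A_j} = n. Then the n functions g_{A_j,r} (for 1 ≤ j ≤ n_A and 0 ≤ r < m_{A_j}), regarded as functions on the half-plane {Re w < 0}, are linearly independent over ℂ. -/
open Complex Filter Set Finset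
open scoped Real

noncomputable section

/-- The balanced gamma product `𝚪_{α,β}(s)`. -/
def gammaProd {n : ℕ} (α β : Fin n → ℂ) (s : ℂ) : ℂ :=
  (∏ i, (Complex.Gamma (s - α i + 1))⁻¹) * ∏ i, (Complex.Gamma (-s + β i + 1))⁻¹

/-- The local solution `g_{A,r}(w) = Σ_{l≥0} (2πi)^{-r} (d/dt)^r [𝚪_{α,β}(l+t)e^{(l+t)w}]|_{t=ν}`
of the hypergeometric equation at `0`, in the exponential coordinate `z = e^w`. -/
def gA {n : ℕ} (α β : Fin n → ℝ) (ν : ℝ) (r : ℕ) (w : ℂ) : ℂ :=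
  ∑' l : ℕ, ((2 * (π : ℂ) * Complex.I) ^ r)⁻¹ *
    iteratedDeriv r
      (fun t : ℂ =>
        gammaProd (fun i => (α i : ℂ)) (fun i => (β i : ℂ)) ((l : ℂ) + t) *
          Complex.exp (((l : ℂ) + t) * w)) (ν : ℂ)

section algebra

variable {V : Type*} [AddCommGroup V] [Module ℂ V]

lemma aux_N (T : Module.End ℂ V) (a : ℂ) (v : ℕ → V)
    (hT : ∀ r, T (v r) = a • ∑ k ∈ Finset.range (r + 1), (r.choose k : ℂ) • v k) (r : ℕ) :
    (T - a • 1) (v r) = a • ∑ k ∈ Finset.range r, (r.choose k : ℂ) • v k := by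
  simp [hT, Finset.sum_range_succ, smul_add]

lemma aux_kill (T : Module.End ℂ V) (a : ℂ) (v : ℕ → V)
    (hT : ∀ r, T (v r) = a • ∑ k ∈ Finset.range (r + 1), (r.choose k : ℂ) • v k) (s : ℕ) :
    ∀ r < s, ((T - a • 1) ^ s) (v r) = 0 := by
  induction s with
  | zero => intro r hr; omega
  | succ s ih =>
    intro r hr
    rw [pow_succ, Module.End.mul_apply, aux_N T a v hT, map_smul, map_sum]
    rw [Finset.sum_eq_zero, smul_zero]
    intro k hk
    rw [map_smul, ih k (by have := Finset.mem_range.1 hk; omega), smul_zero]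

lemma aux_top (T : Module.End ℂ V) (a : ℂ) (v : ℕ → V)
    (hT : ∀ r, T (v r) = a • ∑ k ∈ Finset.range (r + 1), (r.choose k : ℂ) • v k) (r : ℕ) :
    ((T - a • 1) ^ r) (v r) = (a ^ r * (r.factorial : ℂ)) • v 0 := by
  induction r with
  | zero => simp
  | succ r ih =>
    rw [pow_succ, Module.End.mul_apply, aux_N T a v hT, map_smul, map_sum,
      Finset.sum_range_succ, Finset.sum_eq_zero, zero_add, map_smul, ih, smul_smul, smul_smul]
    · congr 1
      rw [Nat.choose_succ_self_right, Nat.factorial_succ]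
      push_cast
      ring
    · intro k hk
      rw [map_smul, aux_kill T a v hT r k (Finset.mem_range.1 hk), smul_zero]

lemma aux_indep (T : Module.End ℂ V) (a : ℂ) (ha : a ≠ 0) (v : ℕ → V)
    (hT : ∀ r, T (v r) = a • ∑ k ∈ Finset.range (r + 1), (r.choose k : ℂ) • v k)
    (h0 : v 0 ≠ 0) (m : ℕ) : LinearIndependent ℂ (fun i : Fin m => v i) := by
  induction m with
  | zero => exact linearIndependent_empty_type
  | succ m ih =>
    rw [linearIndependent_finSucc']
    refine ⟨ih, fun hmem => ?_⟩
    have hle : Submodule.span ℂ (Set.range (Fin.init fun i : Fin (m + 1) => v i)) ≤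
        LinearMap.ker ((T - a • 1) ^ m) := by
      rw [Submodule.span_le]
      rintro _ ⟨i, rfl⟩
      exact aux_kill T a v hT m i i.2
    have := hle hmem
    rw [LinearMap.mem_ker] at this
    simp only [Fin.val_last] at this
    rw [aux_top T a v hT] at this
    simp [ha, h0, Nat.factorial_ne_zero] at this

lemma aux_sigma (T : Module.End ℂ V) {q : ℕ} (A : Fin q → ℂ) (hA : Function.Injective A)
    (hA0 : ∀ j, A j ≠ 0) (v : Fin q → ℕ → V)
    (hT : ∀ j r, T (v j r) = A j • ∑ k ∈ Finset.range (r + 1), (r.choose k : ℂ) • v j k)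
    (h0 : ∀ j, v j 0 ≠ 0) (m : Fin q → ℕ) :
    LinearIndependent ℂ (fun p : Σ j : Fin q, Fin (m j) => v p.1 p.2) := by
  refine linearIndependent_iUnion_finite (f := fun j (i : Fin (m j)) => v j i)
    (fun j => aux_indep T (A j) (hA0 j) (v j) (hT j) (h0 j) (m j)) ?_
  intro i t _ hi
  have hsp : ∀ j, Submodule.span ℂ (Set.range fun k : Fin (m j) => v j k) ≤
      T.maxGenEigenspace (A j) := by
    intro j
    rw [Submodule.span_le]
    rintro _ ⟨k, rfl⟩
    exact (Module.End.mem_maxGenEigenspace _ _ _).2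
      ⟨k + 1, aux_kill T (A j) (v j) (hT j) _ _ (Nat.lt_succ_self _)⟩
  have hind := (Module.End.independent_maxGenEigenspace T).comp hA
  refine (hind i).mono (hsp i) ?_
  refine iSup₂_le fun j hj => ?_
  exact (hsp j).trans (le_iSup₂_of_le j (fun h => hi (h ▸ hj)) le_rfl)

end algebra

section analysis

variable {n : ℕ}

lemma differentiable_gammaProd (α β : Fin n → ℂ) : Differentiable ℂ (gammaProd α β) := by
  unfold gammaProd
  have h := Complex.differentiable_one_div_Gamma
  refine Differentiable.mul ?_ ?_
  · refine Differentiable.fun_finsetProd fun i _ => ?_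
    exact h.comp (by fun_prop : Differentiable ℂ fun s : ℂ => s - α i + 1)
  · refine Differentiable.fun_finsetProd fun i _ => ?_
    exact h.comp (by fun_prop : Differentiable ℂ fun s : ℂ => -s + β i + 1)

lemma gammaProd_succ (α β : Fin n → ℂ) (s : ℂ) :
    gammaProd α β (s + 1) * ∏ i, (s - α i + 1) = gammaProd α β s * ∏ i, (-s + β i) := by
  unfold gammaProd
  have h1 : ∏ i, (Complex.Gamma (s - α i + 1))⁻¹ =
      (∏ i, (s - α i + 1)) * ∏ i, (Complex.Gamma (s + 1 - α i + 1))⁻¹ := by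
    rw [← Finset.prod_mul_distrib]
    refine Finset.prod_congr rfl fun i _ => ?_
    rw [Complex.one_div_Gamma_eq_self_mul_one_div_Gamma_add_one (s - α i + 1)]
    ring_nf
  have h2 : ∏ i, (Complex.Gamma (-(s + 1) + β i + 1))⁻¹ =
      (∏ i, (-s + β i)) * ∏ i, (Complex.Gamma (-s + β i + 1))⁻¹ := by
    rw [← Finset.prod_mul_distrib]
    refine Finset.prod_congr rfl fun i _ => ?_
    rw [← Complex.one_div_Gamma_eq_self_mul_one_div_Gamma_add_one (-s + β i)]
    ring_nf
  rw [h1, h2]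
  ring

/-- Uniform ratio bound on the unit disc around `c`. -/
lemma gammaProd_ratio (α β : Fin n → ℂ) (c : ℂ) (ρ : ℝ) (hρ : 1 < ρ) :
    ∃ L : ℕ, ∀ l : ℕ, L ≤ l → ∀ t ∈ Metric.closedBall c 1,
      ‖gammaProd α β ((l : ℂ) + t + 1)‖ ≤ ρ * ‖gammaProd α β ((l : ℂ) + t)‖ := by
  obtain ⟨B, hB0, hBα, hBβ⟩ : ∃ B : ℝ, 0 ≤ B ∧ (∀ i, ‖α i‖ + ‖c‖ + 2 ≤ B) ∧
      (∀ i, ‖β i‖ + ‖c‖ + 2 ≤ B) := by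
    refine ⟨(∑ i, ‖α i‖) + (∑ i, ‖β i‖) + ‖c‖ + 2, by positivity, fun i => ?_, fun i => ?_⟩
    · have := Finset.single_le_sum (f := fun i => ‖α i‖) (fun i _ => norm_nonneg _)
        (Finset.mem_univ i)
      have h2 : 0 ≤ ∑ i, ‖β i‖ := by positivity
      linarith
    · have := Finset.single_le_sum (f := fun i => ‖β i‖) (fun i _ => norm_nonneg _)
        (Finset.mem_univ i)
      have h2 : 0 ≤ ∑ i, ‖α i‖ := by positivity
      linarith
  have hlim : Tendsto (fun l : ℕ => (((l : ℝ) + B) / ((l : ℝ) - B)) ^ n) atTop (nhds 1) := by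
    have h1 : Tendsto (fun l : ℕ => ((l : ℝ) + B) / ((l : ℝ) - B)) atTop (nhds 1) := by
      have h2 : Tendsto (fun l : ℕ => 1 + 2 * B / ((l : ℝ) - B)) atTop (nhds (1 + 0)) := by
        refine tendsto_const_nhds.add (Tendsto.const_div_atTop ?_ _)
        exact tendsto_atTop_add_const_right _ (-B) tendsto_natCast_atTop_atTop
      rw [add_zero] at h2
      refine h2.congr' ?_
      filter_upwards [tendsto_natCast_atTop_atTop.eventually_gt_atTop B] with l hl
      have : (l : ℝ) - B ≠ 0 := by linarith
      field_simp
      ring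
    simpa using h1.pow n
  obtain ⟨L, hL⟩ := Filter.eventually_atTop.1 ((hlim.eventually_le_const hρ).and
    (tendsto_natCast_atTop_atTop.eventually_gt_atTop B))
  refine ⟨L, fun l hl t ht => ?_⟩
  obtain ⟨h1, h2⟩ := hL l hl
  have ht' : ‖t‖ ≤ ‖c‖ + 1 := by
    have := norm_sub_norm_le t c
    rw [mem_closedBall_iff_norm] at ht
    linarith
  have hpos : 0 < ((l : ℝ) - B) ^ n := pow_pos (by linarith) n
  have key := congrArg norm (gammaProd_succ α β ((l : ℂ) + t))
  rw [norm_mul, norm_mul, norm_prod, norm_prod] at key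
  have hlow : ((l : ℝ) - B) ^ n ≤ ∏ i, ‖(l : ℂ) + t - α i + 1‖ := by
    have := Finset.prod_le_prod (s := Finset.univ) (f := fun _ : Fin n => (l : ℝ) - B)
      (g := fun i => ‖(l : ℂ) + t - α i + 1‖) (fun i _ => by linarith) (fun i _ => by
        have e : ‖(l : ℂ)‖ ≤ ‖(l : ℂ) + t - α i + 1‖ + ‖t‖ + ‖α i‖ + 1 := by
          have : (l : ℂ) = ((l : ℂ) + t - α i + 1) - t + α i - 1 := by ring
          calc ‖(l : ℂ)‖ = ‖((l : ℂ) + t - α i + 1) - t + α i - 1‖ := by rw [← this]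
            _ ≤ ‖((l : ℂ) + t - α i + 1) - t + α i‖ + ‖(1 : ℂ)‖ := norm_sub_le _ _
            _ ≤ ‖((l : ℂ) + t - α i + 1) - t‖ + ‖α i‖ + ‖(1 : ℂ)‖ := by
              gcongr; exact norm_add_le _ _
            _ ≤ ‖((l : ℂ) + t - α i + 1)‖ + ‖t‖ + ‖α i‖ + ‖(1 : ℂ)‖ := by
              gcongr; exact norm_sub_le _ _
            _ = _ := by rw [norm_one]
        rw [Complex.norm_natCast] at e
        have := hBα i
        linarith)
    simpa using this
  have hup : ∏ i, ‖-((l : ℂ) + t) + β i‖ ≤ ((l : ℝ) + B) ^ n := by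
    have := Finset.prod_le_prod (s := Finset.univ) (g := fun _ : Fin n => (l : ℝ) + B)
      (f := fun i => ‖-((l : ℂ) + t) + β i‖) (fun i _ => norm_nonneg _) (fun i _ => by
        have e : ‖-((l : ℂ) + t) + β i‖ ≤ ‖(l : ℂ)‖ + ‖t‖ + ‖β i‖ := by
          refine (norm_add_le _ _).trans ?_
          rw [norm_neg]
          gcongr
          exact norm_add_le _ _
        rw [Complex.norm_natCast] at e
        have := hBβ i
        linarith)
    simpa using this
  rw [div_pow, div_le_iff₀ hpos] at h1
  refine le_of_mul_le_mul_right ?_ hpos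
  calc ‖gammaProd α β ((l : ℂ) + t + 1)‖ * ((l : ℝ) - B) ^ n
      ≤ ‖gammaProd α β ((l : ℂ) + t + 1)‖ * ∏ i, ‖(l : ℂ) + t - α i + 1‖ := by gcongr
    _ = ‖gammaProd α β ((l : ℂ) + t)‖ * ∏ i, ‖-((l : ℂ) + t) + β i‖ := key
    _ ≤ ‖gammaProd α β ((l : ℂ) + t)‖ * (ρ * ((l : ℝ) - B) ^ n) := by
        gcongr; exact hup.trans h1
    _ = _ := by ring

lemma gammaProd_bound (α β : Fin n → ℂ) (c : ℂ) (ρ : ℝ) (hρ : 1 < ρ) :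
    ∃ (L : ℕ) (C : ℝ), 0 ≤ C ∧ ∀ k : ℕ, ∀ t ∈ Metric.closedBall c 1,
      ‖gammaProd α β (((k + L : ℕ) : ℂ) + t)‖ ≤ C * ρ ^ k := by
  obtain ⟨L, hL⟩ := gammaProd_ratio α β c ρ hρ
  obtain ⟨C, hC⟩ := (isCompact_closedBall c 1).exists_bound_of_continuousOn
    (f := fun t => gammaProd α β ((L : ℂ) + t))
    ((differentiable_gammaProd α β).continuous.comp (by fun_prop)).continuousOn
  refine ⟨L, C, (norm_nonneg _).trans (hC c (by simp)), fun k t ht => ?_⟩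
  induction k with
  | zero => simpa using hC t ht
  | succ k ih =>
    have := hL (k + L) (by omega) t ht
    have e : (((k + 1 + L : ℕ) : ℂ) + t) = ((k + L : ℕ) : ℂ) + t + 1 := by push_cast; ring
    rw [e]
    calc _ ≤ _ := this
      _ ≤ ρ * (C * ρ ^ k) := by gcongr
      _ = _ := by ring

lemma diff_term (α β : Fin n → ℂ) (l : ℕ) (w : ℂ) :
    Differentiable ℂ (fun t : ℂ => gammaProd α β ((l : ℂ) + t) *
          Complex.exp (((l : ℂ) + t) * w)) := by
  refine Differentiable.mul ?_ (by fun_prop)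
  exact (differentiable_gammaProd α β).comp (by fun_prop : Differentiable ℂ fun t : ℂ => (l : ℂ) + t)

lemma summable_term (α β : Fin n → ℂ) (c : ℂ) (r : ℕ) (w : ℂ) (hw : w.re < 0) :
    Summable (fun l : ℕ => iteratedDeriv r (fun t : ℂ => gammaProd α β ((l : ℂ) + t) *
          Complex.exp (((l : ℂ) + t) * w)) c) := by
  obtain ⟨L, C, hC0, hC⟩ := gammaProd_bound α β c (Real.exp (-w.re / 2))
    (Real.one_lt_exp_iff.2 (by linarith))
  rw [← summable_nat_add_iff L]
  have hgeo : Summable (fun k : ℕ => (r.factorial * (C * Real.exp (L * w.re) *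
      Real.exp ((‖c‖ + 1) * ‖w‖))) * Real.exp (w.re / 2) ^ k) :=
    (summable_geometric_of_lt_one (Real.exp_pos _).le
      (by rw [← Real.exp_zero]; exact Real.exp_lt_exp.2 (by linarith))).mul_left _
  refine Summable.of_norm_bounded hgeo fun k => ?_
  have := Complex.norm_iteratedDeriv_le_of_forall_mem_sphere_norm_le (c := c) (R := 1)
    (C := (C * Real.exp (L * w.re) * Real.exp ((‖c‖ + 1) * ‖w‖)) * Real.exp (w.re / 2) ^ k) r
    one_pos (diff_term α β (k + L) w).diffContOnCl ?_
  · refine this.trans (le_of_eq ?_)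
    rw [one_pow]; ring
  · intro t ht
    have htb : t ∈ Metric.closedBall c 1 := Metric.sphere_subset_closedBall ht
    have ht' : ‖t‖ ≤ ‖c‖ + 1 := by
      have := norm_sub_norm_le t c
      rw [mem_closedBall_iff_norm] at htb
      linarith
    have hexp : ‖Complex.exp ((((k + L : ℕ) : ℂ) + t) * w)‖ ≤
        Real.exp ((k + L) * w.re) * Real.exp ((‖c‖ + 1) * ‖w‖) := by
      rw [Complex.norm_exp, ← Real.exp_add]
      apply Real.exp_le_exp.2
      rw [add_mul, Complex.add_re]
      have h1 : (((k + L : ℕ) : ℂ) * w).re = (k + L) * w.re := by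
        rw [← Complex.ofReal_natCast, Complex.re_ofReal_mul]; push_cast; ring
      have h2 : (t * w).re ≤ (‖c‖ + 1) * ‖w‖ := by
        refine (Complex.re_le_norm _).trans ?_
        rw [norm_mul]; gcongr
      rw [h1]; linarith
    rw [norm_mul]
    calc _ ≤ (C * Real.exp (-w.re / 2) ^ k) *
          (Real.exp ((k + L) * w.re) * Real.exp ((‖c‖ + 1) * ‖w‖)) := by
          gcongr; exact hC k t htb
      _ = _ := by
          have : Real.exp (-w.re / 2) ^ k * Real.exp ((k + L) * w.re) =
              Real.exp (L * w.re) * Real.exp (w.re / 2) ^ k := by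
            rw [← Real.exp_nat_mul, ← Real.exp_nat_mul, ← Real.exp_add, ← Real.exp_add]
            congr 1; ring
          linear_combination C * Real.exp ((‖c‖ + 1) * ‖w‖) * this

lemma gA_shift (α β : Fin n → ℝ) (ν : ℝ) (r : ℕ) (w : ℂ) (hw : w.re < 0) :
    gA α β ν r (w + 2 * (π : ℂ) * Complex.I) =
      Complex.exp (2 * (π : ℂ) * Complex.I * ν) *
        ∑ k ∈ Finset.range (r + 1), (r.choose k : ℂ) * gA α β ν k w := by
  have hne : (2 * (π : ℂ) * Complex.I) ≠ 0 := Complex.two_pi_I_ne_zero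
  have hs := fun k => (summable_term (fun i => (α i : ℂ)) (fun i => (β i : ℂ)) (ν : ℂ) k w hw).mul_left
    ((2 * (π : ℂ) * Complex.I) ^ k)⁻¹
  unfold gA
  simp_rw [← tsum_mul_left]
  rw [← Summable.tsum_finsetSum (fun k _ => (hs k).mul_left _), ← tsum_mul_left]
  refine tsum_congr fun l => ?_
  have e : (fun t : ℂ => gammaProd (fun i => (α i : ℂ)) (fun i => (β i : ℂ)) ((l : ℂ) + t) *
          Complex.exp (((l : ℂ) + t) * (w + 2 * (π : ℂ) * Complex.I))) =
      fun t : ℂ => (gammaProd (fun i => (α i : ℂ)) (fun i => (β i : ℂ)) ((l : ℂ) + t) *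
          Complex.exp (((l : ℂ) + t) * w)) * Complex.exp (2 * (π : ℂ) * Complex.I * t) := by
    funext t
    have : Complex.exp (((l : ℂ) + t) * (w + 2 * (π : ℂ) * Complex.I)) =
        Complex.exp (((l : ℂ) + t) * w) * Complex.exp (2 * (π : ℂ) * Complex.I * t) := by
      rw [← Complex.exp_add, Complex.exp_eq_exp_iff_exists_int]
      exact ⟨l, by push_cast; ring⟩
    rw [this]; ring
  rw [e, iteratedDeriv_fun_mul (diff_term _ _ l w).contDiff.contDiffAt
    (by fun_prop), Finset.mul_sum, Finset.mul_sum]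
  refine Finset.sum_congr rfl fun k hk => ?_
  rw [iteratedDeriv_cexp_const_mul]
  have hk' : k ≤ r := by have := Finset.mem_range.1 hk; omega
  have hp : ((2 * (π : ℂ) * Complex.I) ^ r) =
      (2 * (π : ℂ) * Complex.I) ^ k * (2 * (π : ℂ) * Complex.I) ^ (r - k) := by
    rw [← pow_add]; congr 1; omega
  have h1 := pow_ne_zero k hne
  have h2 := pow_ne_zero (r - k) hne
  rw [hp]
  generalize (2 * (π : ℂ) * Complex.I) ^ k = x at *
  generalize (2 * (π : ℂ) * Complex.I) ^ (r - k) = y at *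
  generalize iteratedDeriv k (_ : ℂ → ℂ) (ν : ℂ) = D
  field_simp

lemma gA_zero_ne (α β : Fin n → ℝ) (i₀ : Fin n)
    (hres : ∀ i i' : Fin n, ∀ k : ℤ, α i - β i' ≠ (k : ℝ)) :
    ∃ w : ℂ, w.re < 0 ∧ gA α β (α i₀) 0 w ≠ 0 := by
  by_contra! hcon
  set a : ℕ → ℂ := fun l => gammaProd (fun i => (α i : ℂ)) (fun i => (β i : ℂ)) ((l : ℂ) + (α i₀ : ℂ))
    with ha
  have hterm : ∀ w : ℂ, ∀ l : ℕ, iteratedDeriv 0 (fun t : ℂ =>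
      gammaProd (fun i => (α i : ℂ)) (fun i => (β i : ℂ)) ((l : ℂ) + t) *
          Complex.exp (((l : ℂ) + t) * w)) (α i₀ : ℂ) =
      Complex.exp ((α i₀ : ℂ) * w) * (Complex.exp w ^ l * a l) := by
    intro w l
    rw [iteratedDeriv_zero, add_mul, Complex.exp_add, Complex.exp_nat_mul]
    ring
  have hsum : ∀ z : ℂ, z ≠ 0 → ‖z‖ < 1 → HasSum (fun l => z ^ l * a l) 0 := by
    intro z hz hz1
    have hre : (Complex.log z).re < 0 := by
      rw [Complex.log_re]; exact Real.log_neg (norm_pos_iff.2 hz) hz1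
    have h1 := hcon _ hre
    have h2 := summable_term (fun i => (α i : ℂ)) (fun i => (β i : ℂ)) (α i₀ : ℂ) 0 _ hre
    unfold gA at h1
    simp_rw [hterm, Complex.exp_log hz] at h1 h2
    rw [summable_mul_left_iff (Complex.exp_ne_zero _)] at h2
    simp only [pow_zero, inv_one, one_mul] at h1
    rw [tsum_mul_left] at h1
    have h3 := (mul_eq_zero.1 h1).resolve_left (Complex.exp_ne_zero _)
    rw [← h3]
    exact h2.hasSum
  have hz0 : ∀ z : ℂ, ‖z‖ < 1 → HasSum (fun l => z ^ l * a l) (∑' l, z ^ l * a l) := by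
    intro z hz
    by_cases h : z = 0
    · subst h
      refine (summable_of_ne_finset_zero (s := {0}) fun l hl => ?_).hasSum
      have : l ≠ 0 := by simpa using hl
      simp [this]
    · exact (hsum z h hz).summable.hasSum
  have hps : HasFPowerSeriesAt (fun z : ℂ => ∑' l, z ^ l * a l)
      (FormalMultilinearSeries.ofScalars ℂ a) 0 := by
    rw [hasFPowerSeriesAt_iff]
    filter_upwards [Metric.ball_mem_nhds (0 : ℂ) one_pos] with z hz
    simpa using hz0 z (by simpa using hz)
  have hzero : (fun z : ℂ => ∑' l, z ^ l * a l) =ᶠ[nhds 0] 0 := by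
    refine (hps.analyticAt.frequently_zero_iff_eventually_zero).1 ?_
    refine Filter.Eventually.frequently ?_
    filter_upwards [self_mem_nhdsWithin, nhdsWithin_le_nhds (Metric.ball_mem_nhds (0 : ℂ) one_pos)]
      with z h1 h2
    exact (hsum z h1 (by simpa using h2)).tsum_eq
  have hp0 := (hps.congr hzero).eq_zero
  have hall : ∀ l, a l = 0 := by
    intro l
    have := congrArg (fun p => FormalMultilinearSeries.coeff p l) hp0
    simp only [FormalMultilinearSeries.coeff_ofScalars] at this
    rw [this]
    rfl
  obtain ⟨l, hl⟩ := exists_nat_gt (∑ i, |α i - α i₀|)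
  have := hall l
  simp only [ha, gammaProd, mul_eq_zero, Finset.prod_eq_zero_iff, inv_eq_zero] at this
  rcases this with ⟨i, -, hi⟩ | ⟨i, -, hi⟩
  · refine Complex.Gamma_ne_zero_of_re_pos ?_ hi
    have h1 := Finset.single_le_sum (f := fun i => |α i - α i₀|) (fun i _ => abs_nonneg _)
        (Finset.mem_univ i)
    have h2 := le_abs_self (α i - α i₀)
    simp
    linarith
  · rw [Complex.Gamma_eq_zero_iff] at hi
    obtain ⟨k, hk⟩ := hi
    apply hres i₀ i (k + 1 - l)
    have hk' : -((l : ℝ) + α i₀) + β i + 1 = -(k : ℝ) := by exact_mod_cast hk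
    push_cast
    linarith

/-- The shift `w ↦ w + 2πi` acting on functions on the left half-plane. -/
def shiftEnd : Module.End ℂ ({w : ℂ // w.re < 0} → ℂ) :=
  LinearMap.funLeft ℂ ℂ (fun w : {w : ℂ // w.re < 0} =>
    (⟨(w : ℂ) + 2 * (π : ℂ) * Complex.I, by simpa using w.2⟩ : {w : ℂ // w.re < 0}))

end analysis

/-- Let `α, β` be real tuples with `αᵢ - β_{i'} ∉ ℤ` for all `i, i'`. Let
`A₁,…,A_{n_A}` be the distinct values among the `e^{2πiαᵢ}`, with multiplicities
`m_{Aⱼ} = #{i : e^{2πiαᵢ} = Aⱼ}` (so `Σⱼ m_{Aⱼ} = n`) and `ν(Aⱼ) = min{αᵢ : e^{2πiαᵢ} = Aⱼ}`.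
Then the `n` functions `g_{Aⱼ,r}` (`1 ≤ j ≤ n_A`, `0 ≤ r < m_{Aⱼ}`), regarded as functions on
the half-plane `{Re w < 0}`, are linearly independent over `ℂ`. -/
theorem local_solutions_at_zero_linearIndependent (n nA : ℕ) (α β : Fin n → ℝ)
    (hres : ∀ i i' : Fin n, ∀ k : ℤ, α i - β i' ≠ (k : ℝ))
    (A : Fin nA → ℂ) (hinj : Function.Injective A)
    (hval : ∀ j, ∃ i, Complex.exp (2 * (π : ℂ) * Complex.I * (α i : ℂ)) = A j)
    (hsurj : ∀ i, ∃ j, Complex.exp (2 * (π : ℂ) * Complex.I * (α i : ℂ)) = A j)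
    (m : Fin nA → ℕ)
    (hm : ∀ j, m j =
      Nat.card {i : Fin n // Complex.exp (2 * (π : ℂ) * Complex.I * (α i : ℂ)) = A j})
    (hn : ∑ j, m j = n)
    (ν : Fin nA → ℝ)
    (hν₁ : ∀ j, ∃ i, α i = ν j ∧ Complex.exp (2 * (π : ℂ) * Complex.I * (α i : ℂ)) = A j)
    (hν₂ : ∀ j i, Complex.exp (2 * (π : ℂ) * Complex.I * (α i : ℂ)) = A j → ν j ≤ α i) :
    LinearIndependent ℂ
      (fun p : Σ j : Fin nA, Fin (m j) =>
        fun w : {w : ℂ // w.re < 0} => gA α β (ν p.1) (p.2 : ℕ) (w : ℂ)) := by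
  have hA0 : ∀ j, A j ≠ 0 := fun j => by
    obtain ⟨i, hi⟩ := hval j
    rw [← hi]; exact Complex.exp_ne_zero _
  refine aux_sigma shiftEnd A hinj hA0
    (fun j r => fun w : {w : ℂ // w.re < 0} => gA α β (ν j) r (w : ℂ)) ?_ ?_ m
  · intro j r
    obtain ⟨i, hi, hA⟩ := hν₁ j
    funext w
    have := gA_shift α β (ν j) r w w.2
    rw [← hi, hA] at this
    simpa [shiftEnd, LinearMap.funLeft_apply, Finset.sum_apply, hi] using this
  · intro j h0
    obtain ⟨i, hi, hA⟩ := hν₁ j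
    obtain ⟨w, hw, hne⟩ := gA_zero_ne α β i hres
    rw [hi] at hne
    exact hne (congrFun h0 ⟨w, hw⟩)
end
end

section
/- Let α_1,…,α_n, β_1,…,β_n ∈ ℂ with Re(β_i − α_i) > 0 for each i, and let H = h_{α_1,β_1} ∗ h_{α_2,β_2} ∗ ⋯ ∗ h_{α_n,β_n} be the n-fold convolution over ℝ. Then H is a continuous function supported in [−n/2, n/2], and for every s ∈ ℂ one has ∫_ℝ e^{−2πisφ} H(φ) dφ = 𝚪_{α,β}(s). -/
open Complex Filter Set Finset MeasureTheory
open scoped Real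

noncomputable section

/-- The function `h_{α,β}(φ) = e^{2πiαφ}(1 + e^{2πiφ})^{β-α}/Γ(β-α+1)` on `(-1/2, 1/2)`,
extended by `0` (principal branch power). -/
def hfun (α β : ℂ) : ℝ → ℂ := fun φ =>
  if φ ∈ Set.Ioo (-(1 : ℝ) / 2) ((1 : ℝ) / 2) then
    Complex.exp (2 * (π : ℂ) * Complex.I * α * (φ : ℂ)) *
      (1 + Complex.exp (2 * (π : ℂ) * Complex.I * (φ : ℂ))) ^ (β - α) /
        Complex.Gamma (β - α + 1)
  else 0

/-- Convolution over `ℝ`: `(f ∗ g)(x) = ∫ f(x - y) g(y) dy`. -/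
def conv (f g : ℝ → ℂ) : ℝ → ℂ := fun x => ∫ y : ℝ, f (x - y) * g y

/-- The iterated convolution `f₁ ∗ (f₂ ∗ (⋯ ∗ fₙ))` of a list of functions. -/
def convList : List (ℝ → ℂ) → (ℝ → ℂ)
  | [] => fun _ => 0
  | [f] => f
  | f :: g :: rest => conv f (convList (g :: rest))


theorem one_add_exp_re_nonneg {w : ℂ} (hw : w.re ≤ 0) : 0 ≤ (1 + Complex.exp w).re := by
  have h1 : ‖Complex.exp w‖ ≤ 1 := by
    rw [Complex.norm_exp]; exact Real.exp_le_one_iff.2 hw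
  have h2 := (abs_le.1 (Complex.abs_re_le_norm (Complex.exp w))).1
  simp only [Complex.add_re, Complex.one_re]
  linarith

theorem one_add_exp_re_pos {w : ℂ} (hw : w.re < 0) : 0 < (1 + Complex.exp w).re := by
  have h1 : ‖Complex.exp w‖ < 1 := by
    rw [Complex.norm_exp]; exact Real.exp_lt_one_iff.2 hw
  have h2 := (abs_le.1 (Complex.abs_re_le_norm (Complex.exp w))).1
  simp only [Complex.add_re, Complex.one_re]
  linarith

theorem pow_continuousAt {c : ℂ} (hc : 0 < c.re) {w : ℂ} (hw : w.re ≤ 0) :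
    ContinuousAt (fun w : ℂ => (1 + Complex.exp w) ^ c) w :=
  ContinuousAt.comp (f := fun w : ℂ => 1 + Complex.exp w) (g := fun z : ℂ => z ^ c)
    (Complex.continuousAt_cpow_const_of_re_pos (Or.inl (one_add_exp_re_nonneg hw)) hc)
    (by fun_prop)

theorem pow_norm_le {c : ℂ} (hc : 0 < c.re) {w : ℂ} (hw : w.re ≤ 0) :
    ‖(1 + Complex.exp w) ^ c‖ ≤ (2 : ℝ) ^ c.re * Real.exp (π * |c.im|) := by
  refine (Complex.norm_cpow_le _ _).trans ?_
  rw [div_eq_mul_inv, ← Real.exp_neg]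
  have h1 : ‖Complex.exp w‖ ≤ 1 := by
    rw [Complex.norm_exp]; exact Real.exp_le_one_iff.2 hw
  have h2 : ‖1 + Complex.exp w‖ ≤ 2 := by
    refine (norm_add_le _ _).trans ?_
    rw [norm_one]; linarith
  gcongr
  calc -((1 + Complex.exp w).arg * c.im) ≤ |(1 + Complex.exp w).arg * c.im| := neg_le_abs _
    _ = |(1 + Complex.exp w).arg| * |c.im| := abs_mul _ _
    _ ≤ π * |c.im| := by gcongr; exact Complex.abs_arg_le_pi _

/-- The integrand on the line `re = 0`, as a function of the angle. -/
def angInt (c t : ℂ) (y : ℝ) : ℂ :=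
  Complex.exp (-t * ((y : ℂ) * Complex.I)) * (1 + Complex.exp ((y : ℂ) * Complex.I)) ^ c

theorem angPow_continuous {c : ℂ} (hc : 0 < c.re) :
    Continuous (fun y : ℝ => (1 + Complex.exp ((y : ℂ) * Complex.I)) ^ c) := by
  rw [continuous_iff_continuousAt]
  intro y
  exact ContinuousAt.comp (f := fun y : ℝ => (y : ℂ) * Complex.I)
    (g := fun w : ℂ => (1 + Complex.exp w) ^ c)
    (pow_continuousAt hc (by simp)) (by fun_prop)

theorem angInt_continuous {c : ℂ} (hc : 0 < c.re) (t : ℂ) : Continuous (angInt c t) := by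
  unfold angInt
  exact Continuous.mul (by fun_prop) (angPow_continuous hc)

theorem beta_change {c t : ℂ} (hc : 0 < c.re) (ht : t.re < 0) :
    IntegrableOn (fun x : ℝ => Complex.exp (-t * x) * (1 - Complex.exp x) ^ c) (Iic 0) ∧
    ∫ x in Iic (0:ℝ), Complex.exp (-t * x) * (1 - Complex.exp x) ^ c =
      Complex.betaIntegral (-t) (c + 1) := by
  have him : Real.exp '' (Iio (0:ℝ)) = Set.Ioo 0 1 := by
    ext x
    constructor
    · rintro ⟨y, hy, rfl⟩
      exact ⟨Real.exp_pos _, Real.exp_lt_one_iff.2 hy⟩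
    · rintro ⟨h0, h1⟩
      exact ⟨Real.log x, Real.log_neg h0 h1, Real.exp_log h0⟩
  set g : ℝ → ℂ := fun x => (x : ℂ) ^ (-t - 1) * (1 - (x : ℂ)) ^ (c + 1 - 1) with hg
  have hgi : IntegrableOn g (Ioo 0 1) := by
    have := Complex.betaIntegral_convergent (u := -t) (v := c + 1) (by simpa using ht)
      (by simp; linarith)
    rw [intervalIntegrable_iff_integrableOn_Ioo_of_le zero_le_one] at this
    exact this
  have hd : ∀ x ∈ Iio (0:ℝ), HasDerivWithinAt Real.exp (Real.exp x) (Iio 0) x :=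
    fun x _ => (Real.hasDerivAt_exp x).hasDerivWithinAt
  have heq : ∀ x ∈ Iio (0:ℝ), |Real.exp x| • g (Real.exp x) =
      Complex.exp (-t * x) * (1 - Complex.exp x) ^ c := by
    intro x hx
    rw [abs_of_pos (Real.exp_pos x), hg]
    simp only [Complex.real_smul, Complex.ofReal_exp, add_sub_cancel_right]
    rw [Complex.cpow_def_of_ne_zero (Complex.exp_ne_zero _), ← Complex.ofReal_exp,
      ← Complex.ofReal_log (Real.exp_pos x).le, Real.log_exp, Complex.ofReal_exp, ← mul_assoc,
      ← Complex.exp_add]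
    congr 2
    ring
  rw [← him, integrableOn_image_iff_integrableOn_abs_deriv_smul measurableSet_Iio hd
    Real.exp_injective.injOn, integrableOn_congr_fun heq measurableSet_Iio] at hgi
  refine ⟨(integrableOn_Iic_iff_integrableOn_Iio (by simp)).2 hgi, ?_⟩
  rw [integral_Iic_eq_integral_Iio, ← setIntegral_congr_fun measurableSet_Iio heq,
    ← integral_image_eq_integral_abs_deriv_smul measurableSet_Iio hd
    Real.exp_injective.injOn g, him, Complex.betaIntegral,
    intervalIntegral.integral_of_le zero_le_one, integral_Ioc_eq_integral_Ioo]

theorem rect_identity {c : ℂ} (t : ℂ) (hc : 0 < c.re) {R : ℝ} (hR : R ≤ 0) :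
    (Complex.exp (t * (π * Complex.I)) - Complex.exp (-t * (π * Complex.I))) *
      (∫ x in R..0, Complex.exp (-t * x) * (1 - Complex.exp x) ^ c) +
    Complex.I * (∫ y in (-π)..π, angInt c t y) -
    Complex.I * (∫ y in (-π)..π, Complex.exp (-t * (R + y * Complex.I)) *
      (1 + Complex.exp (R + y * Complex.I)) ^ c) = 0 := by
  have key := Complex.integral_boundary_rect_eq_zero_of_continuousOn_of_differentiableOn
    (fun w : ℂ => Complex.exp (-t * w) * (1 + Complex.exp w) ^ c) (⟨R, -π⟩ : ℂ) (⟨0, π⟩ : ℂ) ?_ ?_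
  · have e1 : ∀ x : ℝ, Complex.exp (-t * (x + ((-π : ℝ) : ℂ) * Complex.I)) *
        (1 + Complex.exp (x + ((-π : ℝ) : ℂ) * Complex.I)) ^ c =
        Complex.exp (t * (π * Complex.I)) * (Complex.exp (-t * x) * (1 - Complex.exp x) ^ c) := by
      intro x
      have : Complex.exp (x + ((-π : ℝ) : ℂ) * Complex.I) = - Complex.exp x := by
        rw [Complex.exp_add]
        simp [Complex.exp_neg, Complex.exp_pi_mul_I]
      rw [this, ← sub_eq_add_neg, ← mul_assoc, ← Complex.exp_add]
      congr 2
      push_cast; ring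
    have e2 : ∀ x : ℝ, Complex.exp (-t * (x + (π : ℂ) * Complex.I)) *
        (1 + Complex.exp (x + (π : ℂ) * Complex.I)) ^ c =
        Complex.exp (-t * (π * Complex.I)) * (Complex.exp (-t * x) * (1 - Complex.exp x) ^ c) := by
      intro x
      have : Complex.exp (x + (π : ℂ) * Complex.I) = - Complex.exp x := by
        rw [Complex.exp_add]
        simp [Complex.exp_pi_mul_I]
      rw [this, ← sub_eq_add_neg, ← mul_assoc, ← Complex.exp_add]
      congr 2
      ring
    simp only [e1, e2, intervalIntegral.integral_const_mul, Complex.ofReal_zero, zero_add,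
      smul_eq_mul] at key
    rw [sub_mul]
    exact key
  · intro w hw
    have hw' : w.re ≤ 0 := by
      have := hw.1
      simp only [Set.mem_preimage, uIcc_of_le hR] at this
      exact this.2
    exact (ContinuousAt.mul (by fun_prop) (pow_continuousAt hc hw')).continuousWithinAt
  · intro w hw
    have hw' : w.re < 0 := by
      have := hw.1
      simp only [Set.mem_preimage, max_eq_right hR] at this
      exact this.2
    refine (DifferentiableAt.mul (by fun_prop) ?_).differentiableWithinAt
    exact DifferentiableAt.cpow (by fun_prop) (by fun_prop) (Or.inl (one_add_exp_re_pos hw'))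

theorem left_tendsto {c t : ℂ} (hc : 0 < c.re) (ht : t.re < 0) :
    Tendsto (fun R : ℝ => ∫ y in (-π)..π, Complex.exp (-t * (R + y * Complex.I)) *
      (1 + Complex.exp (R + y * Complex.I)) ^ c) atBot (nhds 0) := by
  have hb : ∀ R : ℝ, R ≤ 0 → ‖∫ y in (-π)..π, Complex.exp (-t * (R + y * Complex.I)) *
      (1 + Complex.exp (R + y * Complex.I)) ^ c‖ ≤
      Real.exp (-t.re * R) * (Real.exp (|t.im| * π) * ((2 : ℝ) ^ c.re * Real.exp (π * |c.im|)) *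
        |π - -π|) := by
    intro R hR
    rw [← mul_assoc]
    refine intervalIntegral.norm_integral_le_of_norm_le_const ?_
    intro y hy
    rw [uIoc_of_le (by linarith [Real.pi_pos])] at hy
    rw [norm_mul, ← mul_assoc]
    refine mul_le_mul ?_ (pow_norm_le hc (by simpa using hR)) (norm_nonneg _) (by positivity)
    rw [Complex.norm_exp, ← Real.exp_add]
    apply Real.exp_le_exp.2
    have : t.im * y ≤ |t.im| * π := by
      calc t.im * y ≤ |t.im * y| := le_abs_self _
        _ = |t.im| * |y| := abs_mul _ _
        _ ≤ |t.im| * π := by gcongr; exact abs_le.2 ⟨hy.1.le, hy.2⟩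
    simp
    linarith
  apply squeeze_zero_norm' (a := fun R : ℝ => Real.exp (-t.re * R) *
    (Real.exp (|t.im| * π) * ((2 : ℝ) ^ c.re * Real.exp (π * |c.im|)) * |π - -π|))
  · filter_upwards [eventually_le_atBot 0] with R hR using hb R hR
  · rw [← zero_mul (Real.exp (|t.im| * π) * ((2 : ℝ) ^ c.re * Real.exp (π * |c.im|)) * |π - -π|)]
    apply Tendsto.mul_const
    apply Real.tendsto_exp_atBot.comp
    exact tendsto_id.const_mul_atBot (by linarith)

theorem angInt_integral_neg {c t : ℂ} (hc : 0 < c.re) (ht : t.re < 0) :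
    ∫ y in (-π)..π, angInt c t y = 2 * π * Complex.Gamma (c + 1) *
      ((Complex.Gamma (t + 1))⁻¹ * (Complex.Gamma (c - t + 1))⁻¹) := by
  obtain ⟨hi, hbeta⟩ := beta_change hc ht
  have hlim := intervalIntegral_tendsto_integral_Iic (0:ℝ) hi tendsto_id
  rw [hbeta] at hlim
  have hl2 := ((hlim.const_mul (Complex.exp (t * (π * Complex.I)) -
    Complex.exp (-t * (π * Complex.I)))).add_const
      (Complex.I * (∫ y in (-π)..π, angInt c t y))).sub
      ((left_tendsto hc ht).const_mul Complex.I)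
  have h0 := tendsto_nhds_unique (hl2.congr' (f₂ := fun _ => (0:ℂ)) (by
    filter_upwards [eventually_le_atBot 0] with R hR using rect_identity t hc hR))
    tendsto_const_nhds
  have hG := Complex.Gamma_mul_Gamma_eq_betaIntegral (s := -t) (t := c + 1)
    (by simpa using ht) (by simp; linarith)
  have hne : Complex.Gamma (c - t + 1) ≠ 0 :=
    Complex.Gamma_ne_zero_of_re_pos (by simp; linarith)
  rw [show -t + (c + 1) = c - t + 1 by ring] at hG
  have hrefl := Complex.Gamma_mul_Gamma_one_sub (-t)
  have hne2 : Complex.Gamma (-t) ≠ 0 := Complex.Gamma_ne_zero_of_re_pos (by simpa using ht)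
  rw [show 1 - -t = t + 1 by ring, mul_neg, Complex.sin_neg] at hrefl
  have hsin : Complex.exp (t * (π * Complex.I)) - Complex.exp (-t * (π * Complex.I)) =
      2 * Complex.I * Complex.sin (π * t) := by
    rw [Complex.sin]
    have : (Complex.I)^2 = -1 := Complex.I_sq
    rw [show -(π * t : ℂ) * Complex.I = -t * (π * Complex.I) by ring,
      show (π * t : ℂ) * Complex.I = t * (π * Complex.I) by ring]
    linear_combination (Complex.exp (t * (π * Complex.I)) - Complex.exp (-t * (π * Complex.I))) * this
  rw [hsin] at h0
  have hB : Complex.betaIntegral (-t) (c + 1) =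
      Complex.Gamma (-t) * Complex.Gamma (c + 1) * (Complex.Gamma (c - t + 1))⁻¹ := by
    field_simp; linear_combination -hG
  have hpi : (π : ℂ) ≠ 0 := Complex.ofReal_ne_zero.2 Real.pi_ne_zero
  have hs2 : Complex.sin (π * t) * Complex.Gamma (-t) = -π * (Complex.Gamma (t + 1))⁻¹ := by
    by_cases hs : Complex.sin (π * t) = 0
    · rw [hs] at hrefl
      simp only [neg_zero, div_zero, mul_eq_zero, hne2, false_or] at hrefl
      simp [hs, hrefl]
    · have : Complex.Gamma (t + 1) ≠ 0 := by
        intro h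
        rw [h, mul_zero] at hrefl
        exact div_ne_zero hpi (neg_ne_zero.2 hs) hrefl.symm
      rw [eq_div_iff (neg_ne_zero.2 hs)] at hrefl
      rw [eq_mul_inv_iff_mul_eq₀ this]
      linear_combination -hrefl
  have hI := Complex.I_ne_zero
  apply mul_left_cancel₀ hI
  rw [hB] at h0
  linear_combination h0 - 2 * Complex.I * Complex.Gamma (c + 1) * (Complex.Gamma (c - t + 1))⁻¹ * hs2

theorem angInt_integral_differentiable {c : ℂ} (hc : 0 < c.re) :
    Differentiable ℂ (fun t : ℂ => ∫ y in (-π)..π, angInt c t y) := by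
  intro t₀
  have hpc := angPow_continuous hc
  refine (intervalIntegral.hasDerivAt_integral_of_dominated_loc_of_deriv_le
    (F := fun t y => angInt c t y)
    (F' := fun t y => -((y : ℂ) * Complex.I) * angInt c t y)
    (s := Metric.ball t₀ 1)
    (bound := fun _ => π * (Real.exp ((‖t₀‖ + 1) * π) *
      ((2 : ℝ) ^ c.re * Real.exp (π * |c.im|))))
    (Metric.ball_mem_nhds t₀ one_pos) ?_ ?_ ?_ ?_ ?_ ?_).2.differentiableAt
  · exact Eventually.of_forall fun t => (angInt_continuous hc t).aestronglyMeasurable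
  · exact (angInt_continuous hc t₀).intervalIntegrable _ _
  · exact (Continuous.mul (by fun_prop) (angInt_continuous hc t₀)).aestronglyMeasurable
  · refine Eventually.of_forall fun y hy t ht => ?_
    rw [uIoc_of_le (by linarith [Real.pi_pos])] at hy
    have hy' : |y| ≤ π := abs_le.2 ⟨hy.1.le, hy.2⟩
    have hyn : ‖(y : ℂ) * Complex.I‖ ≤ π := by simpa using hy'
    have htn : ‖t‖ ≤ ‖t₀‖ + 1 := by
      have h1 : ‖t - t₀‖ < 1 := by simpa [dist_eq_norm] using ht
      have h2 := norm_le_norm_add_norm_sub' t t₀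
      linarith
    unfold angInt
    rw [norm_mul, norm_neg, norm_mul (Complex.exp _)]
    refine mul_le_mul hyn ?_ (by positivity) (by positivity)
    refine mul_le_mul ?_ (pow_norm_le hc (by simp)) (by positivity) (by positivity)
    refine (Complex.norm_exp_le_exp_norm _).trans (Real.exp_le_exp.2 ?_)
    rw [norm_mul, norm_neg]
    exact mul_le_mul htn hyn (by positivity) (by positivity)
  · exact intervalIntegrable_const
  · refine Eventually.of_forall fun y _ t _ => ?_
    unfold angInt
    have h1 : HasDerivAt (fun t : ℂ => -t * ((y : ℂ) * Complex.I)) (-1 * ((y : ℂ) * Complex.I)) t :=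
      (hasDerivAt_id t).neg.mul_const _
    have h2 := h1.cexp.mul_const ((1 + Complex.exp ((y : ℂ) * Complex.I)) ^ c)
    exact h2.congr_deriv (by ring)

theorem angInt_integral {c : ℂ} (hc : 0 < c.re) (t : ℂ) :
    ∫ y in (-π)..π, angInt c t y = 2 * π * Complex.Gamma (c + 1) *
      ((Complex.Gamma (t + 1))⁻¹ * (Complex.Gamma (c - t + 1))⁻¹) := by
  have hd : Differentiable ℂ (fun t : ℂ => 2 * π * Complex.Gamma (c + 1) *
      ((Complex.Gamma (t + 1))⁻¹ * (Complex.Gamma (c - t + 1))⁻¹)) := by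
    refine Differentiable.const_mul (Differentiable.mul ?_ ?_) _
    · exact Complex.differentiable_one_div_Gamma.comp (by fun_prop : Differentiable ℂ fun t : ℂ => t + 1)
    · exact Complex.differentiable_one_div_Gamma.comp
        (by fun_prop : Differentiable ℂ fun t : ℂ => c - t + 1)
  have := AnalyticOnNhd.eq_of_eventuallyEq (𝕜 := ℂ) (z₀ := (-1 : ℂ))
    ((angInt_integral_differentiable hc).differentiableOn.analyticOnNhd isOpen_univ)
    (hd.differentiableOn.analyticOnNhd isOpen_univ) (by
      have ho : IsOpen {t : ℂ | t.re < 0} := isOpen_lt Complex.continuous_re continuous_const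
      filter_upwards [ho.mem_nhds (show (-1 : ℂ) ∈ {t : ℂ | t.re < 0} by simp)] with t ht
      exact angInt_integral_neg hc ht)
  exact congrFun this t

theorem hfun_continuous {α β : ℂ} (h : 0 < (β - α).re) : Continuous (hfun α β) := by
  set g : ℝ → ℂ := fun φ => Complex.exp (2 * (π : ℂ) * Complex.I * α * (φ : ℂ)) *
      (1 + Complex.exp (2 * (π : ℂ) * Complex.I * (φ : ℂ))) ^ (β - α) /
        Complex.Gamma (β - α + 1) with hg
  have hgc : Continuous g := by
    refine Continuous.div_const (Continuous.mul (by fun_prop) ?_) _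
    have := (angPow_continuous h).comp (by fun_prop : Continuous fun φ : ℝ => 2 * π * φ)
    convert this using 4 with φ
    simp only [Function.comp]
    push_cast
    congr 2
    ring
  have hne : β - α ≠ 0 := by
    intro h0; rw [h0] at h; simp at h
  have hg1 : g (1 / 2) = 0 := by
    have : Complex.exp (2 * (π : ℂ) * Complex.I * ((1 / 2 : ℝ) : ℂ)) = -1 := by
      rw [← Complex.exp_pi_mul_I]; congr 1; push_cast; ring
    simp only [hg, this]
    simp [Complex.zero_cpow hne]
  have hg2 : g (-1 / 2) = 0 := by
    have : Complex.exp (2 * (π : ℂ) * Complex.I * ((-1 / 2 : ℝ) : ℂ)) = -1 := by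
      rw [show 2 * (π : ℂ) * Complex.I * ((-1 / 2 : ℝ) : ℂ) = -(π * Complex.I) by push_cast; ring,
        Complex.exp_neg, Complex.exp_pi_mul_I]
      norm_num
    simp only [hg, this]
    simp [Complex.zero_cpow hne]
  have heq : hfun α β = fun φ => g (max (-1 / 2) (min φ (1 / 2))) := by
    funext φ
    simp only [hfun]
    split_ifs with hm
    · rw [min_eq_left hm.2.le, max_eq_right hm.1.le]
    · rcases le_or_gt φ (-1 / 2) with h1 | h1
      · rw [min_eq_left (by linarith), max_eq_left h1, hg2]
      · have h2 : 1 / 2 ≤ φ := by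
          by_contra hlt
          exact hm ⟨h1, not_le.1 hlt⟩
        rw [min_eq_right h2, max_eq_right (by norm_num), hg1]
  rw [heq]
  exact hgc.comp (by fun_prop)

theorem hfun_fourier {α β : ℂ} (h : 0 < (β - α).re) (s : ℂ) :
    ∫ φ : ℝ, Complex.exp (-(2 * (π : ℂ) * Complex.I) * s * (φ : ℂ)) * hfun α β φ =
      (Complex.Gamma (s - α + 1))⁻¹ * (Complex.Gamma (-s + β + 1))⁻¹ := by
  have hG : Complex.Gamma (β - α + 1) ≠ 0 :=
    Complex.Gamma_ne_zero_of_re_pos (by rw [Complex.add_re, Complex.one_re]; linarith)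
  have hpi : (π : ℂ) ≠ 0 := Complex.ofReal_ne_zero.2 Real.pi_ne_zero
  have h1 : (fun φ : ℝ => Complex.exp (-(2 * (π : ℂ) * Complex.I) * s * (φ : ℂ)) * hfun α β φ) =
      (Set.Ioo (-(1 : ℝ) / 2) ((1 : ℝ) / 2)).indicator
        (fun φ => (Complex.Gamma (β - α + 1))⁻¹ * angInt (β - α) (s - α) (2 * π * φ)) := by
    funext φ
    simp only [hfun, Set.indicator_apply]
    split_ifs with hm
    · unfold angInt
      rw [show 2 * (π : ℂ) * Complex.I * (φ : ℂ) = ((2 * π * φ : ℝ) : ℂ) * Complex.I by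
        push_cast; ring, ← mul_div_assoc, ← mul_assoc, ← Complex.exp_add, div_eq_inv_mul]
      congr 3
      push_cast; ring
    · simp
  rw [h1, integral_indicator measurableSet_Ioo, ← integral_Ioc_eq_integral_Ioo,
    ← intervalIntegral.integral_of_le (by norm_num), intervalIntegral.integral_const_mul,
    intervalIntegral.integral_comp_mul_left (angInt (β - α) (s - α))
      (by positivity : (2 * π : ℝ) ≠ 0),
    show 2 * π * (-1 / 2 : ℝ) = -π by ring, show 2 * π * (1 / 2 : ℝ) = π by ring,
    angInt_integral h, show β - α - (s - α) + 1 = -s + β + 1 by ring, Complex.real_smul]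
  push_cast
  field_simp

open scoped Convolution in
theorem conv_eq (f g : ℝ → ℂ) :
    conv f g = (g ⋆[ContinuousLinearMap.mul ℝ ℂ] f) := by
  funext x
  simp only [conv, MeasureTheory.convolution]
  congr 1
  funext y
  exact mul_comm _ _

theorem hasCompactSupport_of_Icc {f : ℝ → ℂ} {a : ℝ}
    (hf : ∀ φ : ℝ, φ ∉ Set.Icc (-a / 2) (a / 2) → f φ = 0) : HasCompactSupport f :=
  HasCompactSupport.intro isCompact_Icc hf

theorem conv_props {f g : ℝ → ℂ} {a b : ℝ} (hf : Continuous f) (hg : Continuous g)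
    (hfs : ∀ φ : ℝ, φ ∉ Set.Icc (-a / 2) (a / 2) → f φ = 0)
    (hgs : ∀ φ : ℝ, φ ∉ Set.Icc (-b / 2) (b / 2) → g φ = 0) :
    Continuous (conv f g) ∧
    (∀ φ : ℝ, φ ∉ Set.Icc (-(a + b) / 2) ((a + b) / 2) → conv f g φ = 0) ∧
    ∀ s : ℂ, ∫ φ : ℝ, Complex.exp (-(2 * (π : ℂ) * Complex.I) * s * (φ : ℂ)) * conv f g φ =
      (∫ φ : ℝ, Complex.exp (-(2 * (π : ℂ) * Complex.I) * s * (φ : ℂ)) * f φ) *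
      ∫ φ : ℝ, Complex.exp (-(2 * (π : ℂ) * Complex.I) * s * (φ : ℂ)) * g φ := by
  have hfc := hasCompactSupport_of_Icc hfs
  have hgc := hasCompactSupport_of_Icc hgs
  refine ⟨?_, ?_, ?_⟩
  · rw [conv_eq]
    exact hfc.continuous_convolution_right _ hg.locallyIntegrable hf
  · intro φ hφ
    simp only [conv]
    rw [integral_eq_zero_of_ae]
    refine Eventually.of_forall fun y => ?_
    simp only [Pi.zero_apply, mul_eq_zero]
    by_cases hy : y ∈ Set.Icc (-b / 2) (b / 2)
    · left
      apply hfs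
      intro hm
      exact hφ ⟨by linarith [hm.1, hy.1], by linarith [hm.2, hy.2]⟩
    · right; exact hgs y hy
  · intro s
    set e : ℝ → ℂ := fun φ => Complex.exp (-(2 * (π : ℂ) * Complex.I) * s * (φ : ℂ)) with he
    have hec : Continuous e := by rw [he]; fun_prop
    have h1 : (fun φ => e φ * conv f g φ) = conv (fun φ => e φ * f φ) (fun φ => e φ * g φ) := by
      funext x
      simp only [conv]
      rw [← integral_const_mul]
      congr 1
      funext y
      have : e x = e (x - y) * e y := by
        simp only [he]
        rw [← Complex.exp_add]
        congr 1
        push_cast; ring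
      rw [this]; ring
    have hfi : Integrable (fun φ => e φ * f φ) :=
      (hec.mul hf).integrable_of_hasCompactSupport (hfc.mul_left)
    have hgi : Integrable (fun φ => e φ * g φ) :=
      (hec.mul hg).integrable_of_hasCompactSupport (hgc.mul_left)
    change ∫ φ, (fun φ => e φ * conv f g φ) φ = (∫ φ, e φ * f φ) * ∫ φ, e φ * g φ
    rw [h1, conv_eq, integral_convolution _ hgi hfi, ContinuousLinearMap.mul_apply', mul_comm]

theorem hfun_support (α β : ℂ) (φ : ℝ) (hφ : φ ∉ Set.Icc (-(1 : ℝ) / 2) (1 / 2)) :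
    hfun α β φ = 0 := by
  simp only [hfun]
  rw [if_neg]
  exact fun hm => hφ ⟨hm.1.le, hm.2.le⟩

theorem main_aux (n : ℕ) : ∀ (α β : Fin (n + 1) → ℂ) (_ : ∀ i, 0 < (β i - α i).re),
    Continuous (convList (List.ofFn fun i => hfun (α i) (β i))) ∧
    (∀ φ : ℝ, φ ∉ Set.Icc (-((n + 1 : ℕ) : ℝ) / 2) (((n + 1 : ℕ) : ℝ) / 2) →
      convList (List.ofFn fun i => hfun (α i) (β i)) φ = 0) ∧
    (∀ s : ℂ,
      (∫ φ : ℝ, Complex.exp (-(2 * (π : ℂ) * Complex.I) * s * (φ : ℂ)) *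
        convList (List.ofFn fun i => hfun (α i) (β i)) φ) = gammaProd α β s) := by
  induction n with
  | zero =>
    intro α β h
    have e : convList (List.ofFn fun i => hfun (α i) (β i)) = hfun (α 0) (β 0) := by
      simp [List.ofFn_succ, convList]
    rw [e]
    refine ⟨hfun_continuous (h 0), fun φ hφ => hfun_support _ _ _ (by simpa using hφ), fun s => ?_⟩
    rw [hfun_fourier (h 0)]
    simp [gammaProd]
  | succ n ih =>
    intro α β h
    obtain ⟨i1, i2, i3⟩ := ih (fun i => α i.succ) (fun i => β i.succ) (fun i => h i.succ)
    have e : convList (List.ofFn fun i => hfun (α i) (β i)) =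
        conv (hfun (α 0) (β 0)) (convList (List.ofFn fun i : Fin (n + 1) =>
          hfun (α i.succ) (β i.succ))) := by
      rw [List.ofFn_succ, List.ofFn_succ]
      rfl
    rw [e]
    obtain ⟨p1, p2, p3⟩ := conv_props (hfun_continuous (h 0)) i1 (hfun_support (α 0) (β 0)) i2
    refine ⟨p1, fun φ hφ => p2 φ ?_, fun s => ?_⟩
    · have : (1 : ℝ) + ((n + 1 : ℕ) : ℝ) = ((n + 1 + 1 : ℕ) : ℝ) := by push_cast; ring
      rw [this]; exact hφ
    · rw [p3, i3, hfun_fourier (h 0)]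
      simp only [gammaProd]
      rw [Fin.prod_univ_succ (n := n + 1) (fun i => (Complex.Gamma (s - α i + 1))⁻¹),
        Fin.prod_univ_succ (n := n + 1) (fun i => (Complex.Gamma (-s + β i + 1))⁻¹)]
      ring

/-- For `α₁,…,αₙ,β₁,…,βₙ ∈ ℂ` with `Re(βᵢ - αᵢ) > 0`, the `n`-fold
convolution `H = h_{α₁,β₁} ∗ ⋯ ∗ h_{αₙ,βₙ}` is continuous, supported in `[-n/2, n/2]`, and
its Fourier transform is the balanced gamma product: `∫ e^{-2πisφ} H(φ) dφ = 𝚪_{α,β}(s)`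
for all `s ∈ ℂ`. -/
theorem convolution_fourier_transform (n : ℕ) (hn : 1 ≤ n) (α β : Fin n → ℂ)
    (h : ∀ i, 0 < (β i - α i).re)
    (H : ℝ → ℂ) (hH : H = convList (List.ofFn fun i => hfun (α i) (β i))) :
    Continuous H ∧
    (∀ φ : ℝ, φ ∉ Set.Icc (-(n : ℝ) / 2) ((n : ℝ) / 2) → H φ = 0) ∧
    (∀ s : ℂ,
      (∫ φ : ℝ, Complex.exp (-(2 * (π : ℂ) * Complex.I) * s * (φ : ℂ)) * H φ) =
        gammaProd α β s) := by
  obtain ⟨m, rfl⟩ : ∃ m, n = m + 1 := ⟨n - 1, by omega⟩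
  subst hH
  exact main_aux m α β h
end
end

section
/- Let α_1,…,α_n, β_1,…,β_n ∈ ℂ with Re(β_i − α_i) > 0 for each i, and let H = h_{α_1,β_1} ∗ ⋯ ∗ h_{α_n,β_n}. Then on each open interval (−n/2 + k, −n/2 + k + 1), k = 0,…,n−1, the (smooth) function H satisfies the hypergeometric differential equation in the angular variable: (D_φ − α_1)∘⋯∘(D_φ − α_n) H (φ) = (−1)^n e^{2πiφ} · (D_φ − β_1)∘⋯∘(D_φ − β_n) H (φ), where D_φ = (2πi)^{−1} d/dφ. -/
open Complex Filter Set Finset MeasureTheory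
open scoped Real

noncomputable section

/-- The first-order operator `D_φ - c : f ↦ (2πi)⁻¹ f' - c·f` in the angular variable. -/
def angOp (c : ℂ) (f : ℝ → ℂ) : ℝ → ℂ :=
  fun φ => (2 * (π : ℂ) * Complex.I)⁻¹ * deriv f φ - c * f φ

/-- The composition `(D_φ - c₁)∘⋯∘(D_φ - cₙ)`. -/
def angOpChain (cs : List ℂ) (f : ℝ → ℂ) : ℝ → ℂ := cs.foldr angOp f


/-- Integrable, continuous and bounded functions. -/
def NiceFun (f : ℝ → ℂ) : Prop := Integrable f ∧ Continuous f ∧ ∃ C : ℝ, ∀ x, ‖f x‖ ≤ C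

/-- The constant `2πi`. -/
def tpi : ℂ := 2 * (π : ℂ) * Complex.I

theorem tpi_ne : tpi ≠ 0 := by
  unfold tpi
  simp [Real.pi_ne_zero]

/-- `F` is a primitive of `2πi (W + c F)`. -/
def Prim (c : ℂ) (F W : ℝ → ℂ) : Prop :=
  ∀ y x : ℝ, F x - F y = tpi * (∫ s in y..x, W s) + tpi * c * ∫ s in y..x, F s

theorem conv_comm (f g : ℝ → ℂ) : conv f g = conv g f := by
  funext x
  unfold conv
  rw [← integral_sub_left_eq_self (fun y => f (x - y) * g y) volume x]
  simp [mul_comm]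

theorem conv_eq_s13 (f g : ℝ → ℂ) (x : ℝ) : conv f g x = ∫ t, f t * g (x - t) := by
  rw [conv_comm]
  unfold conv
  simp [mul_comm]

theorem conv_eq_convolution (f g : ℝ → ℂ) :
    conv f g = MeasureTheory.convolution f g (ContinuousLinearMap.mul ℝ ℂ) volume := by
  funext x
  rw [conv_eq_s13]
  rfl

theorem conv_integrable {f g : ℝ → ℂ} (hf : Integrable f) (hg : Integrable g) :
    Integrable (conv f g) := by
  rw [conv_eq_convolution]
  exact hf.integrable_convolution _ hg

theorem conv_nice {f g : ℝ → ℂ} (hf : Integrable f) (hg : NiceFun g) : NiceFun (conv f g) := by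
  obtain ⟨hg1, hg2, C, hC⟩ := hg
  refine ⟨conv_integrable hf hg1, ?_, C * ∫ t, ‖f t‖, ?_⟩
  · rw [conv_eq_convolution]
    refine BddAbove.continuous_convolution_right_of_integrable _ ?_ hf hg2
    exact ⟨C, by rintro _ ⟨x, rfl⟩; exact hC x⟩
  · intro x
    rw [conv_eq_s13]
    rw [← integral_const_mul]
    refine norm_integral_le_of_norm_le (hf.norm.const_mul C) (Eventually.of_forall fun t => ?_)
    rw [norm_mul, mul_comm]
    gcongr
    exact hC _

theorem conv_left_comm {f g k : ℝ → ℂ} (hf : Integrable f) (hg : Integrable g)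
    (hk : NiceFun k) : conv f (conv g k) = conv g (conv f k) := by
  obtain ⟨-, hk2, C, hC⟩ := hk
  funext x
  have e1 : conv f (conv g k) x = ∫ t, ∫ s, f t * g s * k (x - t - s) := by
    rw [conv_eq_s13]
    congr 1; funext t
    rw [conv_eq_s13, ← integral_const_mul]
    simp [mul_assoc]
  have e2 : conv g (conv f k) x = ∫ s, ∫ t, f t * g s * k (x - t - s) := by
    rw [conv_eq_s13]
    congr 1; funext t
    rw [conv_eq_s13, ← integral_const_mul]
    congr 1; funext s
    rw [show x - s - t = x - t - s by ring]; ring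
  rw [e1, e2]
  apply integral_integral_swap
  have h1 : Integrable (fun p : ℝ × ℝ => f p.1 * g p.2) (volume.prod volume) := hf.mul_prod hg
  refine h1.mul_bdd (c := C) ?_ (Eventually.of_forall fun p => hC _)
  exact (hk2.comp (by fun_prop)).aestronglyMeasurable

theorem conv_interval {T W : ℝ → ℂ} (hT : Integrable T) (hW : Integrable W) (y x : ℝ) :
    ∫ s in y..x, conv T W s = ∫ t, T t * ∫ s in y..x, W (s - t) := by
  simp_rw [conv_eq_s13]
  rw [intervalIntegral_integral_swap]
  · simp
  · have := hT.convolution_integrand (ContinuousLinearMap.mul ℝ ℂ) hW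
    have h2 := this.restrict (s := Set.uIoc y x ×ˢ Set.univ)
    rw [← Measure.prod_restrict, Measure.restrict_univ] at h2
    exact h2

theorem prim_conv {T F W : ℝ → ℂ} {c : ℂ} (hT : Integrable T) (hF : NiceFun F)
    (hW : Integrable W) (h : Prim c F W) : Prim c (conv T F) (conv T W) := by
  intro y x
  rw [conv_interval hT hW, conv_interval hT hF.1, ← integral_const_mul, ← integral_const_mul,
    conv_eq_s13, conv_eq_s13]
  obtain ⟨hF1, hF2, C, hC⟩ := hF
  have hb : ∀ z : ℝ, Integrable (fun t => T t * F (z - t)) := fun z =>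
    hT.mul_bdd (c := C) (hF2.comp (by fun_prop)).aestronglyMeasurable
      (Eventually.of_forall fun p => hC _)
  have hp : ∀ t, T t * F (x - t) - T t * F (y - t) =
      tpi * (T t * ∫ s in y..x, W (s - t)) + tpi * c * (T t * ∫ s in y..x, F (s - t)) := by
    intro t
    have := h (y - t) (x - t)
    rw [intervalIntegral.integral_comp_sub_right (f := W),
      intervalIntegral.integral_comp_sub_right (f := F), ← mul_sub, this]
    ring
  have i2 : Integrable (fun t => T t * ∫ s in y..x, F (s - t)) := by
    refine hT.mul_bdd (c := C * |x - y|) ?_ (Eventually.of_forall fun t => ?_)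
    · have hc : Continuous (fun t => ∫ s in y..x, F (s - t)) := by
        apply intervalIntegral.continuous_parametric_intervalIntegral_of_continuous'
        fun_prop
      exact hc.aestronglyMeasurable
    · exact intervalIntegral.norm_integral_le_of_norm_le_const fun s _ => hC _
  have i1 : Integrable (fun t => tpi * (T t * ∫ s in y..x, W (s - t))) := by
    have := ((hb x).sub (hb y)).sub (i2.const_mul (tpi * c))
    refine this.congr (Eventually.of_forall fun t => ?_)
    have := hp t
    simp only [Pi.sub_apply]
    rw [this]; ring
  rw [← integral_sub (hb x) (hb y), ← integral_add i1 (i2.const_mul _)]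
  congr 1; funext t; exact hp t

theorem prim_hasDerivAt {c : ℂ} {F W : ℝ → ℂ} (h : Prim c F W) (hF : Continuous F)
    (hW : Integrable W) {x : ℝ} (hc : ContinuousAt W x) :
    HasDerivAt F (tpi * (W x + c * F x)) x := by
  have d1 : HasDerivAt (fun u => ∫ s in x..u, W s) (W x) x :=
    intervalIntegral.integral_hasDerivAt_right (by simp)
      ⟨univ, univ_mem, hW.aestronglyMeasurable.restrict⟩ hc
  have d2 : HasDerivAt (fun u => ∫ s in x..u, F s) (F x) x :=
    intervalIntegral.integral_hasDerivAt_right (by simp)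
      ⟨univ, univ_mem, hF.aestronglyMeasurable.restrict⟩ hF.continuousAt
  have d3 := ((d1.const_mul tpi).add (d2.const_mul (tpi * c))).add_const (F x)
  refine (d3.congr_deriv (by ring)).congr_of_eventuallyEq (Eventually.of_forall fun u => ?_)
  have := h x u
  simp only [Pi.add_apply]
  rw [← this]; ring

theorem prim_ae_hasDerivAt {c : ℂ} {F W : ℝ → ℂ} (h : Prim c F W) (hF : Continuous F)
    (hW : Integrable W) :
    ∀ᵐ x, HasDerivAt F (tpi * (W x + c * F x)) x := by
  filter_upwards [LocallyIntegrable.ae_hasDerivAt_integral hW.locallyIntegrable] with x hx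
  have d1 := hx 0
  have d2 : HasDerivAt (fun u => ∫ s in (0:ℝ)..u, F s) (F x) x :=
    intervalIntegral.integral_hasDerivAt_right (hF.intervalIntegrable _ _)
      ⟨univ, univ_mem, hF.aestronglyMeasurable.restrict⟩ hF.continuousAt
  have d3 := ((d1.const_mul tpi).add (d2.const_mul (tpi * c))).add_const (F 0)
  refine (d3.congr_deriv (by ring)).congr_of_eventuallyEq (Eventually.of_forall fun u => ?_)
  have := h 0 u
  simp only [Pi.add_apply]
  rw [← this]; ring

/-- The key one-dimensional regularity argument. -/
theorem final_step {a b : ℂ} {A B U V q : ℝ → ℂ} (hA : Continuous A) (hB : Continuous B)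
    (hU : Integrable U) (hV : Integrable V) (pA : Prim a A U) (pB : Prim b B V)
    (hq : Continuous q) (hUV : ∀ x, U x = q x * V x)
    (hE : ContDiff ℝ 1 (fun x => A x - B x)) {φ : ℝ} (hφ : q φ ≠ 1) :
    angOp a A φ = q φ * angOp b B φ := by
  set E := fun x => A x - B x with hEdef
  have hE' : Continuous (deriv E) := hE.continuous_deriv le_rfl
  set C := fun x => (tpi⁻¹ * deriv E x - a * A x + b * B x) / (q x - 1) with hC
  have hopen : IsOpen {x | q x ≠ 1} := isOpen_ne_fun hq continuous_const
  set V' := fun x => if q x ≠ 1 then C x else V x with hV'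
  have hae : V =ᵐ[volume] V' := by
    filter_upwards [prim_ae_hasDerivAt pA hA hU, prim_ae_hasDerivAt pB hB hV] with x h1 h2
    simp only [hV']
    split_ifs with hx
    · have : deriv E x = _ := (h1.sub h2).deriv
      simp only [hC]
      rw [this, hUV, eq_div_iff (sub_ne_zero.2 hx)]
      field_simp [tpi_ne]
      ring
    · rfl
  have pB' : Prim b B V' := by
    intro y x
    rw [pB y x]
    congr 2
    exact intervalIntegral.integral_congr_ae (hae.mono fun x hx _ => hx)
  have hev : V' =ᶠ[nhds φ] C := by
    filter_upwards [hopen.mem_nhds hφ] with x hx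
    simp only [hV']
    rw [if_pos hx]
  have hcC : ContinuousAt C φ := by
    refine ContinuousAt.div ?_ ?_ (sub_ne_zero.2 hφ)
    · exact (by fun_prop : Continuous _).continuousAt
    · exact (by fun_prop : Continuous _).continuousAt
  have dB := prim_hasDerivAt pB' hB (hV.congr hae) (hcC.congr hev.symm)
  rw [hev.self_of_nhds] at dB
  have dE : HasDerivAt E (deriv E φ) φ := (hE.differentiable one_ne_zero φ).hasDerivAt
  have dA : HasDerivAt A (tpi * (C φ + b * B φ) + deriv E φ) φ := by
    refine (dB.add dE).congr_of_eventuallyEq (Eventually.of_forall fun x => ?_)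
    simp [hEdef]
  have key : C φ * (q φ - 1) = tpi⁻¹ * deriv E φ - a * A φ + b * B φ := by
    simp only [hC]
    rw [div_mul_cancel₀ _ (sub_ne_zero.2 hφ)]
  unfold angOp
  rw [dA.deriv, dB.deriv]
  change tpi⁻¹ * _ - _ = q φ * (tpi⁻¹ * _ - _)
  have := tpi_ne
  rw [mul_add, inv_mul_cancel_left₀ this]
  linear_combination -key

/-- `(D - c) h_{α,β}` as an everywhere defined function. -/
def wfun (α β c : ℂ) : ℝ → ℂ := fun φ =>
  (α - c + (β - α) * (Complex.exp (tpi * φ) / (1 + Complex.exp (tpi * φ)))) * hfun α β φ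

theorem re_one_add (φ : ℝ) : (1 + Complex.exp (tpi * φ)).re = 1 + Real.cos (2 * π * φ) := by
  have : tpi * φ = ((2 * π * φ : ℝ) : ℂ) * Complex.I := by unfold tpi; push_cast; ring
  rw [this, Complex.add_re, Complex.exp_ofReal_mul_I_re, Complex.one_re]

theorem re_nonneg (φ : ℝ) : 0 ≤ (1 + Complex.exp (tpi * φ)).re := by
  rw [re_one_add]; linarith [Real.neg_one_le_cos (2 * π * φ)]

theorem one_add_cos (φ : ℝ) : 1 + Real.cos (2 * π * φ) = 2 * Real.cos (π * φ) ^ 2 := by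
  rw [show 2 * π * φ = 2 * (π * φ) by ring, Real.cos_two_mul]; ring

theorem cos_pos_of {φ : ℝ} (h : φ ∈ Set.Ioo (-(1 : ℝ) / 2) ((1 : ℝ) / 2)) :
    0 < Real.cos (π * φ) := by
  have := Real.pi_pos
  apply Real.cos_pos_of_mem_Ioo
  constructor <;> nlinarith [h.1, h.2]

theorem re_pos {φ : ℝ} (h : φ ∈ Set.Ioo (-(1 : ℝ) / 2) ((1 : ℝ) / 2)) :
    0 < (1 + Complex.exp (tpi * φ)).re := by
  rw [re_one_add, one_add_cos]
  have := cos_pos_of h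
  positivity

theorem norm_one_add {φ : ℝ} (h : φ ∈ Set.Ioo (-(1 : ℝ) / 2) ((1 : ℝ) / 2)) :
    ‖1 + Complex.exp (tpi * φ)‖ = 2 * Real.cos (π * φ) := by
  have e : 1 + Complex.exp (tpi * φ) =
      ((2 * Real.cos (π * φ) : ℝ) : ℂ) * Complex.exp ((π * φ : ℝ) * Complex.I) := by
    push_cast
    rw [Complex.cos, mul_div_cancel₀ _ two_ne_zero, add_mul, ← Complex.exp_add, ← Complex.exp_add]
    unfold tpi
    rw [add_comm]
    congr 1
    · congr 1; ring
    · rw [neg_mul, neg_add_cancel, Complex.exp_zero]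
  rw [e, norm_mul, Complex.norm_exp_ofReal_mul_I, mul_one, Complex.norm_real, Real.norm_eq_abs,
    abs_of_pos]
  have := cos_pos_of h
  positivity

theorem exp_half : Complex.exp (tpi * ((1 / 2 : ℝ) : ℂ)) = -1 := by
  rw [← Complex.exp_pi_mul_I]; congr 1; unfold tpi; push_cast; ring

theorem exp_neg_half : Complex.exp (tpi * ((-1 / 2 : ℝ) : ℂ)) = -1 := by
  have : tpi * ((-1 / 2 : ℝ) : ℂ) = -(π * Complex.I) := by unfold tpi; push_cast; ring
  rw [this, Complex.exp_neg, Complex.exp_pi_mul_I]; norm_num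

/-- The unrestricted formula. -/
def kfun (α β : ℂ) : ℝ → ℂ := fun φ =>
  Complex.exp (tpi * α * φ) * (1 + Complex.exp (tpi * φ)) ^ (β - α) / Complex.Gamma (β - α + 1)

theorem kfun_continuous {α β : ℂ} (h : 0 < (β - α).re) : Continuous (kfun α β) := by
  unfold kfun
  refine (Continuous.mul (by fun_prop) ?_).div_const _
  rw [continuous_iff_continuousAt]
  intro x
  have := Complex.continuousAt_cpow_const_of_re_pos (Or.inl (re_nonneg x)) h
  exact ContinuousAt.comp (f := fun φ : ℝ => 1 + Complex.exp (tpi * φ)) this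
    (by fun_prop : Continuous _).continuousAt

theorem hfun_of_mem {α β : ℂ} {φ : ℝ} (h : φ ∈ Set.Ioo (-(1 : ℝ) / 2) ((1 : ℝ) / 2)) :
    hfun α β φ = kfun α β φ := by
  unfold hfun kfun tpi
  rw [if_pos h]

theorem hfun_of_notMem {α β : ℂ} {φ : ℝ} (h : φ ∉ Set.Ioo (-(1 : ℝ) / 2) ((1 : ℝ) / 2)) :
    hfun α β φ = 0 := by
  unfold hfun
  rw [if_neg h]

theorem hfun_eq_clamp {α β : ℂ} (h : 0 < (β - α).re) :
    hfun α β = fun φ => kfun α β (max (-1 / 2) (min (1 / 2) φ)) := by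
  have hne : β - α ≠ 0 := by intro h0; rw [h0] at h; simp at h
  funext φ
  by_cases hm : φ ∈ Set.Ioo (-(1 : ℝ) / 2) ((1 : ℝ) / 2)
  · rw [hfun_of_mem hm, min_eq_right hm.2.le, max_eq_right hm.1.le]
  · rw [hfun_of_notMem hm]
    rw [Set.mem_Ioo, not_and_or, not_lt, not_lt] at hm
    rcases hm with hm | hm
    · rw [min_eq_right (by linarith), max_eq_left hm]
      unfold kfun
      rw [exp_neg_half]; simp [hne]
    · rw [min_eq_left hm, max_eq_right (by norm_num)]
      unfold kfun
      rw [exp_half]; simp [hne]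

theorem hfun_nice {α β : ℂ} (h : 0 < (β - α).re) : NiceFun (hfun α β) := by
  have hc : Continuous (hfun α β) := by
    rw [hfun_eq_clamp h]
    exact (kfun_continuous h).comp (by fun_prop)
  have hs : HasCompactSupport (hfun α β) := by
    refine HasCompactSupport.intro (K := Set.Icc (-(1 : ℝ) / 2) (1 / 2)) isCompact_Icc ?_
    intro x hx
    exact hfun_of_notMem fun h => hx ⟨h.1.le, h.2.le⟩
  exact ⟨hc.integrable_of_hasCompactSupport hs, hc, hs.exists_bound_of_continuous hc⟩

theorem hfun_hasDerivAt {α β : ℂ} {φ : ℝ} (h : φ ∈ Set.Ioo (-(1 : ℝ) / 2) ((1 : ℝ) / 2)) :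
    HasDerivAt (hfun α β) (tpi * wfun α β 0 φ) φ := by
  have hz : 1 + Complex.exp (tpi * φ) ∈ Complex.slitPlane := Or.inl (re_pos h)
  have hne : 1 + Complex.exp (tpi * φ) ≠ 0 := Complex.slitPlane_ne_zero hz
  have d0 := hasDerivAt_id (φ : ℂ)
  have d1 := (d0.const_mul (tpi * α)).cexp
  have d2 := ((d0.const_mul tpi).cexp.const_add 1).cpow_const (c := β - α) hz
  have d3 := (d1.mul d2).div_const (Complex.Gamma (β - α + 1))
  have d4 := d3.comp_ofReal
  have ev : hfun α β =ᶠ[nhds φ] kfun α β := by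
    filter_upwards [isOpen_Ioo.mem_nhds h] with x hx using hfun_of_mem hx
  refine HasDerivAt.congr_of_eventuallyEq (HasDerivAt.congr_deriv d4 ?_) ev
  unfold wfun
  rw [hfun_of_mem h]
  unfold kfun
  simp only [id]
  rw [Complex.cpow_sub (β - α) 1 hne, Complex.cpow_one]
  ring

theorem wfun_integrable {α β : ℂ} (h : 0 < (β - α).re) (c : ℂ) : Integrable (wfun α β c) := by
  set σ := (β - α).re with hσ
  set I := Set.Ioo (-(1 : ℝ) / 2) ((1 : ℝ) / 2) with hI
  have hn := hfun_nice h
  suffices hs : Integrable (fun φ : ℝ =>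
      (Complex.exp (tpi * φ) / (1 + Complex.exp (tpi * φ))) * hfun α β φ) by
    have := (hn.1.const_mul (α - c)).add (hs.const_mul (β - α))
    refine this.congr (Eventually.of_forall fun φ => ?_)
    simp only [wfun, Pi.add_apply]
    ring
  -- the model integrable function
  have hb : Integrable (I.indicator fun φ : ℝ => ((φ + 1 / 2) * (1 / 2 - φ)) ^ (σ - 1)) := by
    have hb0 := (Complex.betaIntegral_convergent (u := σ) (v := σ) (by simpa) (by simpa)).norm
    have hb1 := hb0.comp_add_right (1 / 2)
    rw [intervalIntegrable_iff_integrableOn_Ioo_of_le (by norm_num)] at hb1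
    rw [show Set.Ioo (0 - 1 / 2 : ℝ) (1 - 1 / 2) = I by rw [hI]; norm_num] at hb1
    rw [integrable_indicator_iff measurableSet_Ioo]
    refine hb1.congr_fun ?_ measurableSet_Ioo
    intro φ hφ
    have h1 : 0 < φ + 1 / 2 := by linarith [hφ.1]
    have h2 : 0 < 1 / 2 - φ := by linarith [hφ.2]
    simp only
    rw [norm_mul, show (1 : ℂ) - ((φ + 1 / 2 : ℝ) : ℂ) = ((1 / 2 - φ : ℝ) : ℂ) by push_cast; ring,
      Complex.norm_cpow_eq_rpow_re_of_pos h1, Complex.norm_cpow_eq_rpow_re_of_pos h2,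
      Real.mul_rpow h1.le h2.le]
    simp
  have hm : AEStronglyMeasurable (fun φ : ℝ =>
      (Complex.exp (tpi * φ) / (1 + Complex.exp (tpi * φ))) * hfun α β φ) volume := by
    have := hn.2.1.measurable
    exact Measurable.aestronglyMeasurable (by fun_prop)
  obtain ⟨M, hM⟩ : ∃ M : ℝ, ∀ φ ∈ Set.Icc (-1 / 2 : ℝ) (1 / 2), ‖Complex.exp (tpi * α * φ)‖ ≤ M :=
    isCompact_Icc.exists_bound_of_continuousOn (by fun_prop)
  set κ := M * Real.exp (π * |(β - α).im|) / ‖Complex.Gamma (β - α + 1)‖ with hκ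
  have hM0 : 0 ≤ M := le_trans (norm_nonneg _) (hM 0 (by norm_num))
  refine (hb.const_mul (κ * (4 ^ (σ - 1) + (4 * π) ^ (σ - 1)))).mono' hm
    (Eventually.of_forall fun φ => ?_)
  by_cases hφ : φ ∈ I
  swap
  · rw [hfun_of_notMem hφ, Set.indicator_of_notMem hφ]; simp
  rw [Set.indicator_of_mem hφ, hfun_of_mem hφ]
  have hzr := re_pos hφ
  have hz0 : 1 + Complex.exp (tpi * φ) ≠ 0 := by intro h0; rw [h0] at hzr; simp at hzr
  have hzn := norm_one_add hφ
  set z := 1 + Complex.exp (tpi * φ) with hz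
  have hcp := cos_pos_of hφ
  have hp1 : 0 < φ + 1 / 2 := by linarith [hφ.1]
  have hp2 : 0 < 1 / 2 - φ := by linarith [hφ.2]
  set p := (φ + 1 / 2) * (1 / 2 - φ) with hp
  have hp0 : 0 < p := mul_pos hp1 hp2
  have hpi := Real.pi_pos
  have habs : |φ| < 1 / 2 := abs_lt.2 ⟨by linarith, by linarith⟩
  have hcabs : Real.cos (π * φ) = Real.cos (π * |φ|) := by
    rw [← Real.cos_abs (π * φ), abs_mul, abs_of_pos hpi]
  have hlow : 4 * p ≤ 2 * Real.cos (π * φ) := by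
    have h1 := Real.one_sub_mul_le_cos (x := π * |φ|) (by positivity) (by nlinarith)
    rw [← hcabs] at h1
    have h2 : 1 - 2 / π * (π * |φ|) = 1 - 2 * |φ| := by field_simp
    rw [h2] at h1
    nlinarith [sq_nonneg (|φ| - 1 / 2), sq_abs φ]
  have hup : 2 * Real.cos (π * φ) ≤ 4 * π * p := by
    have h1 := Real.sin_le (x := π / 2 - π * |φ|) (by nlinarith)
    rw [Real.sin_pi_div_two_sub, ← hcabs] at h1
    have h2 : 4 * π * p - 2 * (π / 2 - π * |φ|) = 4 * π * |φ| * (1 / 2 - |φ|) := by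
      rw [hp]; linear_combination 4 * π * sq_abs φ
    have h3 : 0 ≤ 4 * π * |φ| * (1 / 2 - |φ|) := mul_nonneg (by positivity) (by linarith)
    linarith
  have hpow : ‖z‖ ^ (σ - 1) ≤ (4 ^ (σ - 1) + (4 * π) ^ (σ - 1)) * p ^ (σ - 1) := by
    rw [add_mul, ← Real.mul_rpow (by norm_num) hp0.le, ← Real.mul_rpow (by positivity) hp0.le, hzn]
    rcases le_total 0 (σ - 1) with h1 | h1
    · have := Real.rpow_le_rpow (by positivity) hup h1
      have h3 : 0 ≤ (4 * p) ^ (σ - 1) := by positivity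
      linarith
    · have := Real.rpow_le_rpow_of_nonpos (by positivity) hlow h1
      have h3 : 0 ≤ (4 * π * p) ^ (σ - 1) := by positivity
      linarith
  have hcpow : ‖z ^ (β - α)‖ ≤ ‖z‖ ^ σ * Real.exp (π * |(β - α).im|) := by
    refine (Complex.norm_cpow_le _ _).trans ?_
    rw [div_eq_mul_inv, ← Real.exp_neg]
    gcongr
    calc -(z.arg * (β - α).im) ≤ |z.arg * (β - α).im| := neg_le_abs _
      _ = |z.arg| * |(β - α).im| := abs_mul _ _
      _ ≤ _ := by gcongr; exact Complex.abs_arg_le_pi z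
  have hzpos : 0 < ‖z‖ := norm_pos_iff.2 hz0
  have hexp : ‖Complex.exp (tpi * φ)‖ = 1 := by
    rw [show tpi * φ = ((2 * π * φ : ℝ) : ℂ) * Complex.I by unfold tpi; push_cast; ring]
    exact Complex.norm_exp_ofReal_mul_I _
  unfold kfun
  rw [norm_mul, norm_div, norm_div, norm_mul, hexp, ← hz]
  calc 1 / ‖z‖ * (‖Complex.exp (tpi * α * φ)‖ * ‖z ^ (β - α)‖ / ‖Complex.Gamma (β - α + 1)‖)
      ≤ 1 / ‖z‖ * (M * (‖z‖ ^ σ * Real.exp (π * |(β - α).im|)) / ‖Complex.Gamma (β - α + 1)‖) := by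
        gcongr
        exact hM φ ⟨hφ.1.le, hφ.2.le⟩
    _ = κ * ‖z‖ ^ (σ - 1) := by
        rw [Real.rpow_sub_one hzpos.ne', hκ]; ring
    _ ≤ κ * ((4 ^ (σ - 1) + (4 * π) ^ (σ - 1)) * p ^ (σ - 1)) := by
        have : 0 ≤ κ := by positivity
        gcongr
    _ = _ := by ring

theorem hfun_prim {α β : ℂ} (h : 0 < (β - α).re) (c : ℂ) :
    Prim c (hfun α β) (wfun α β c) := by
  intro y x
  have hn := hfun_nice h
  have e0 : ∫ s in y..x, tpi * wfun α β 0 s = hfun α β x - hfun α β y := by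
    refine integral_eq_of_hasDerivAt_off_countable _ _ (s := {-1 / 2, 1 / 2})
      (by simp) hn.2.1.continuousOn ?_ ((wfun_integrable h 0).const_mul _).intervalIntegrable
    rintro s ⟨-, hs⟩
    by_cases hm : s ∈ Set.Ioo (-(1 : ℝ) / 2) ((1 : ℝ) / 2)
    · exact hfun_hasDerivAt hm
    · have hs2 : s ∈ (Set.Icc (-(1 : ℝ) / 2) ((1 : ℝ) / 2))ᶜ := by
        intro hh
        simp only [Set.mem_insert_iff, Set.mem_singleton_iff, not_or] at hs
        exact hm ⟨lt_of_le_of_ne hh.1 (Ne.symm hs.1), lt_of_le_of_ne hh.2 hs.2⟩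
      have : tpi * wfun α β 0 s = 0 := by simp [wfun, hfun_of_notMem hm]
      rw [this]
      refine (hasDerivAt_const s (0 : ℂ)).congr_of_eventuallyEq ?_
      filter_upwards [isClosed_Icc.isOpen_compl.mem_nhds hs2] with u hu
      exact hfun_of_notMem fun h => hu ⟨h.1.le, h.2.le⟩
  rw [← e0, mul_assoc, ← mul_add, ← intervalIntegral.integral_const_mul c,
    ← intervalIntegral.integral_add ((wfun_integrable h c).intervalIntegrable)
      ((hn.1.const_mul _).intervalIntegrable), ← intervalIntegral.integral_const_mul]
  congr 1; funext s
  simp only [wfun]; ring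

theorem wfun_rel (α β : ℂ) (φ : ℝ) :
    wfun α β α φ = -1 * Complex.exp (tpi * φ) * wfun α β β φ := by
  by_cases hφ : φ ∈ Set.Ioo (-(1 : ℝ) / 2) ((1 : ℝ) / 2)
  · have hzr := re_pos hφ
    have hz0 : 1 + Complex.exp (tpi * φ) ≠ 0 := by intro h0; rw [h0] at hzr; simp at hzr
    unfold wfun
    field_simp
    ring
  · simp [wfun, hfun_of_notMem hφ]

/-- Iterated convolution operator applied to `F`. -/
def cf (fs : List (ℝ → ℂ)) (F : ℝ → ℂ) : ℝ → ℂ := fs.foldr conv F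

/-- The list of the functions `h_{α,β}`. -/
def hl (L : List (ℂ × ℂ)) : List (ℝ → ℂ) := L.map fun p => hfun p.1 p.2

/-- The list of the functions `(D - c) h_{α,β}`. -/
def wl (sel : ℂ × ℂ → ℂ) (L : List (ℂ × ℂ)) : List (ℝ → ℂ) :=
  L.map fun p => wfun p.1 p.2 (sel p)

/-- The positivity condition on the parameters. -/
def Good (L : List (ℂ × ℂ)) : Prop := ∀ p ∈ L, 0 < (p.2 - p.1).re

theorem cf_cons (f : ℝ → ℂ) (fs : List (ℝ → ℂ)) (F : ℝ → ℂ) :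
    cf (f :: fs) F = conv f (cf fs F) := rfl

theorem hl_integrable {L : List (ℂ × ℂ)} (hL : Good L) : ∀ f ∈ hl L, Integrable f := by
  intro f hf
  obtain ⟨p, hp, rfl⟩ := List.mem_map.1 hf
  exact (hfun_nice (hL p hp)).1

theorem wl_integrable {L : List (ℂ × ℂ)} (hL : Good L) (sel : ℂ × ℂ → ℂ) :
    ∀ f ∈ wl sel L, Integrable f := by
  intro f hf
  obtain ⟨p, hp, rfl⟩ := List.mem_map.1 hf
  exact wfun_integrable (hL p hp) _

theorem cf_nice {fs : List (ℝ → ℂ)} {F : ℝ → ℂ} (h : ∀ f ∈ fs, Integrable f)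
    (hF : NiceFun F) : NiceFun (cf fs F) := by
  induction fs with
  | nil => exact hF
  | cons f fs ih =>
    rw [cf_cons]
    exact conv_nice (h f (by simp)) (ih fun g hg => h g (by simp [hg]))

theorem cf_integrable {fs : List (ℝ → ℂ)} {F : ℝ → ℂ} (h : ∀ f ∈ fs, Integrable f)
    (hF : Integrable F) : Integrable (cf fs F) := by
  induction fs with
  | nil => exact hF
  | cons f fs ih =>
    rw [cf_cons]
    exact conv_integrable (h f (by simp)) (ih fun g hg => h g (by simp [hg]))

theorem conv_cf {g : ℝ → ℂ} {fs : List (ℝ → ℂ)} {F : ℝ → ℂ} (hg : Integrable g)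
    (h : ∀ f ∈ fs, Integrable f) (hF : NiceFun F) : conv g (cf fs F) = cf fs (conv g F) := by
  induction fs with
  | nil => rfl
  | cons f fs ih =>
    have h' : ∀ f ∈ fs, Integrable f := fun g hg => h g (by simp [hg])
    rw [cf_cons, cf_cons, ← ih h', conv_left_comm hg (h f (by simp)) (cf_nice h' hF)]

theorem prim_cf {c : ℂ} {fs : List (ℝ → ℂ)} {F W : ℝ → ℂ} (h : ∀ f ∈ fs, Integrable f)
    (hF : NiceFun F) (hW : Integrable W) (hP : Prim c F W) : Prim c (cf fs F) (cf fs W) := by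
  induction fs with
  | nil => exact hP
  | cons f fs ih =>
    have h' : ∀ f ∈ fs, Integrable f := fun g hg => h g (by simp [hg])
    rw [cf_cons, cf_cons]
    exact prim_conv (h f (by simp)) (cf_nice h' hF) (cf_integrable h' hW) (ih h')

theorem conv_hfun_hasDerivAt {α β : ℂ} (h : 0 < (β - α).re) (c : ℂ) {F : ℝ → ℂ}
    (hF : NiceFun F) (x : ℝ) : HasDerivAt (conv (hfun α β) F)
      (tpi * (conv (wfun α β c) F x + c * conv (hfun α β) F x)) x := by
  have hw := wfun_integrable h c
  have hP := prim_conv hF.1 (hfun_nice h) hw (hfun_prim h c)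
  rw [conv_comm F, conv_comm F] at hP
  exact prim_hasDerivAt hP (conv_nice (hfun_nice h).1 hF).2.1 (conv_integrable hw hF.1)
    (conv_nice hw hF).2.1.continuousAt

theorem angOp_conv {α β : ℂ} (h : 0 < (β - α).re) (c : ℂ) {F : ℝ → ℂ} (hF : NiceFun F) :
    angOp c (conv (hfun α β) F) = conv (wfun α β c) F := by
  funext x
  unfold angOp
  rw [(conv_hfun_hasDerivAt h c hF x).deriv]
  change tpi⁻¹ * _ - _ = _
  rw [inv_mul_cancel_left₀ tpi_ne]
  ring

theorem chain_cf (sel : ℂ × ℂ → ℂ) {L : List (ℂ × ℂ)} (hL : Good L) {F : ℝ → ℂ}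
    (hF : NiceFun F) : angOpChain (L.map sel) (cf (hl L) F) = cf (wl sel L) F := by
  induction L generalizing F with
  | nil => rfl
  | cons p L ih =>
    have hL' : Good L := fun q hq => hL q (by simp [hq])
    have hp := hL p (by simp)
    have hn := hfun_nice hp
    have e1 : cf (hl (p :: L)) F = cf (hl L) (conv (hfun p.1 p.2) F) := by
      rw [← conv_cf hn.1 (hl_integrable hL') hF]; rfl
    change angOp (sel p) (angOpChain (L.map sel) (cf (hl (p :: L)) F)) = _
    rw [e1, ih hL' (conv_nice hn.1 hF), ← conv_cf hn.1 (wl_integrable hL' sel) hF,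
      angOp_conv hp _ (cf_nice (wl_integrable hL' sel) hF)]
    rfl

theorem cf_contDiff {L : List (ℂ × ℂ)} (hL : Good L) {F : ℝ → ℂ} (hF : NiceFun F) :
    ContDiff ℝ (L.length : ℕ) (cf (hl L) F) := by
  induction L generalizing F with
  | nil => exact contDiff_zero.2 hF.2.1
  | cons p L ih =>
    have hL' : Good L := fun q hq => hL q (by simp [hq])
    have hp := hL p (by simp)
    have hd := conv_hfun_hasDerivAt hp 0 (cf_nice (hl_integrable hL') hF)
    change ContDiff ℝ ((L.length + 1 : ℕ)) (conv (hfun p.1 p.2) (cf (hl L) F))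
    push_cast
    rw [contDiff_succ_iff_deriv]
    refine ⟨fun x => (hd x).differentiableAt, by simp, ?_⟩
    have e : deriv (conv (hfun p.1 p.2) (cf (hl L) F)) =
        fun x => tpi * cf (hl L) (conv (wfun p.1 p.2 0) F) x := by
      funext x
      rw [(hd x).deriv, conv_cf (wfun_integrable hp 0) (hl_integrable hL') hF]
      ring
    rw [e]
    exact contDiff_const.mul (ih hL' (conv_nice (wfun_integrable hp 0) hF))

theorem convList_eq {L : List (ℂ × ℂ)} (hL : Good L) {p : ℂ × ℂ} (hp : 0 < (p.2 - p.1).re) :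
    convList (hfun p.1 p.2 :: hl L) = cf (hl L) (hfun p.1 p.2) := by
  induction L generalizing p with
  | nil => rfl
  | cons q L ih =>
    have hL' : Good L := fun r hr => hL r (by simp [hr])
    have hq := hL q (by simp)
    change conv (hfun p.1 p.2) (convList (hfun q.1 q.2 :: hl L)) =
      conv (hfun q.1 q.2) (cf (hl L) (hfun p.1 p.2))
    rw [ih hL' hq, conv_cf (hfun_nice hp).1 (hl_integrable hL') (hfun_nice hq), conv_comm,
      ← conv_cf (hfun_nice hq).1 (hl_integrable hL') (hfun_nice hp)]

theorem cf_rel (L : List (ℂ × ℂ)) (p : ℂ × ℂ) (φ : ℝ) :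
    cf (wl Prod.fst L) (wfun p.1 p.2 p.1) φ = (-1 : ℂ) ^ (L.length + 1) *
      Complex.exp (tpi * φ) * cf (wl Prod.snd L) (wfun p.1 p.2 p.2) φ := by
  induction L generalizing φ with
  | nil => simpa [cf, wl] using wfun_rel p.1 p.2 φ
  | cons q L ih =>
    change conv (wfun q.1 q.2 q.1) (cf (wl Prod.fst L) (wfun p.1 p.2 p.1)) φ = _ *
      conv (wfun q.1 q.2 q.2) (cf (wl Prod.snd L) (wfun p.1 p.2 p.2)) φ
    unfold conv
    rw [← integral_const_mul]
    congr 1; funext y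
    rw [ih, wfun_rel]
    have : Complex.exp (tpi * φ) =
        Complex.exp (tpi * ((φ - y : ℝ) : ℂ)) * Complex.exp (tpi * y) := by
      rw [← Complex.exp_add]; congr 1; push_cast; ring
    rw [this, List.length_cons]
    ring

theorem chain_contDiff (cs : List ℂ) (k : ℕ) {f : ℝ → ℂ}
    (hf : ContDiff ℝ ((cs.length + k : ℕ)) f) : ContDiff ℝ (k : ℕ) (angOpChain cs f) := by
  induction cs generalizing k with
  | nil => simpa [angOpChain] using hf
  | cons c cs ih =>
    have h1 : ContDiff ℝ ((k + 1 : ℕ)) (angOpChain cs f) := by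
      apply ih
      convert hf using 2
      simp; ring
    have h2 := h1
    push_cast at h2
    rw [contDiff_succ_iff_deriv] at h2
    exact (contDiff_const.mul h2.2.2).sub
      (contDiff_const.mul (h1.of_le (by exact_mod_cast Nat.le_succ k)))

theorem chain_sub_contDiff (cs ds : List ℂ) (hlen : cs.length = ds.length) (k : ℕ) {f : ℝ → ℂ}
    (hf : ContDiff ℝ ((cs.length + k : ℕ)) f) :
    ContDiff ℝ ((k + 1 : ℕ)) (fun x => angOpChain cs f x - angOpChain ds f x) := by
  induction cs generalizing k ds with
  | nil =>
    obtain rfl : ds = [] := List.length_eq_zero_iff.1 hlen.symm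
    simpa using contDiff_const
  | cons c cs ih =>
    obtain _ | ⟨d, ds⟩ := ds
    · simp at hlen
    have hlen' : cs.length = ds.length := by simpa using hlen
    have hf1 : ContDiff ℝ ((cs.length + (k + 1) : ℕ)) f := by
      convert hf using 2
      simp; ring
    have h1 := ih ds hlen' (k + 1) hf1
    have hc := chain_contDiff cs (k + 1) hf1
    have hd := chain_contDiff ds (k + 1) (hlen' ▸ hf1)
    have h2 := h1
    rw [Nat.cast_add_one, contDiff_succ_iff_deriv] at h2
    have e : (fun x => angOpChain (c :: cs) f x - angOpChain (d :: ds) f x) = fun x =>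
        tpi⁻¹ * deriv (fun x => angOpChain cs f x - angOpChain ds f x) x -
          c * angOpChain cs f x + d * angOpChain ds f x := by
      funext x
      rw [deriv_fun_sub (hc.differentiable (by simp) x) (hd.differentiable (by simp) x)]
      change (tpi⁻¹ * deriv (angOpChain cs f) x - c * angOpChain cs f x) -
        (tpi⁻¹ * deriv (angOpChain ds f) x - d * angOpChain ds f x) = _
      ring
    rw [e]
    exact ((contDiff_const.mul h2.2.2).sub (contDiff_const.mul hc)).add (contDiff_const.mul hd)

theorem list_version {L : List (ℂ × ℂ)} (hL : Good L) {p : ℂ × ℂ} (hp : 0 < (p.2 - p.1).re)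
    {φ : ℝ} (hφ : (-1 : ℂ) ^ (L.length + 1) * Complex.exp (tpi * φ) ≠ 1) :
    angOpChain (p.1 :: L.map Prod.fst) (convList (hfun p.1 p.2 :: hl L)) φ =
      (-1 : ℂ) ^ (L.length + 1) * Complex.exp (tpi * φ) *
        angOpChain (p.2 :: L.map Prod.snd) (convList (hfun p.1 p.2 :: hl L)) φ := by
  rw [convList_eq hL hp]
  have hn := hfun_nice hp
  have hE := chain_sub_contDiff (L.map Prod.fst) (L.map Prod.snd) (by simp) 0
    (f := cf (hl L) (hfun p.1 p.2)) (by simpa using cf_contDiff hL hn)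
  change angOp p.1 (angOpChain _ _) φ = _ * angOp p.2 (angOpChain _ _) φ
  rw [chain_cf Prod.fst hL hn, chain_cf Prod.snd hL hn] at *
  exact final_step (q := fun φ : ℝ => (-1 : ℂ) ^ (L.length + 1) * Complex.exp (tpi * φ))
    (cf_nice (wl_integrable hL _) hn).2.1 (cf_nice (wl_integrable hL _) hn).2.1
    (cf_integrable (wl_integrable hL _) (wfun_integrable hp _))
    (cf_integrable (wl_integrable hL _) (wfun_integrable hp _))
    (prim_cf (wl_integrable hL _) hn (wfun_integrable hp _) (hfun_prim hp _))
    (prim_cf (wl_integrable hL _) hn (wfun_integrable hp _) (hfun_prim hp _))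
    (by fun_prop) (cf_rel L p) (by simpa using hE) hφ

theorem phase_ne {n k : ℕ} {φ : ℝ}
    (hφ : φ ∈ Set.Ioo (-(n : ℝ) / 2 + (k : ℝ)) (-(n : ℝ) / 2 + (k : ℝ) + 1)) :
    (-1 : ℂ) ^ n * Complex.exp (tpi * φ) ≠ 1 := by
  intro h
  rw [← Complex.exp_pi_mul_I, ← Complex.exp_nat_mul, ← Complex.exp_add,
    Complex.exp_eq_one_iff] at h
  obtain ⟨m, hm⟩ := h
  have h2 : (((n : ℝ) / 2 + φ : ℝ) : ℂ) = ((m : ℝ) : ℂ) := by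
    apply mul_right_cancel₀ tpi_ne
    unfold tpi at hm ⊢
    push_cast
    linear_combination hm
  have h3 : (n : ℝ) / 2 + φ = m := by exact_mod_cast h2
  have h4 : ((k : ℤ) : ℝ) < m := by rw [← h3]; push_cast; linarith [hφ.1]
  have h5 : (m : ℝ) < ((k + 1 : ℤ) : ℝ) := by rw [← h3]; push_cast; linarith [hφ.2]
  have h6 : (k : ℤ) < m := by exact_mod_cast h4
  have h7 : m < (k + 1 : ℤ) := by exact_mod_cast h5
  omega

/-- For `α₁,…,αₙ,β₁,…,βₙ ∈ ℂ` with `Re(βᵢ - αᵢ) > 0`, the `n`-fold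
convolution `H = h_{α₁,β₁} ∗ ⋯ ∗ h_{αₙ,βₙ}` satisfies, on each interval
`(-n/2 + k, -n/2 + k + 1)` (`k = 0,…,n-1`), the hypergeometric differential equation
`(D_φ - α₁)∘⋯∘(D_φ - αₙ) H = (-1)ⁿ e^{2πiφ} (D_φ - β₁)∘⋯∘(D_φ - βₙ) H`,
where `D_φ = (2πi)⁻¹ d/dφ`. -/
theorem convolution_satisfies_hypergeometric (n : ℕ) (hn : 1 ≤ n) (α β : Fin n → ℂ)
    (h : ∀ i, 0 < (β i - α i).re)
    (H : ℝ → ℂ) (hH : H = convList (List.ofFn fun i => hfun (α i) (β i))) :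
    ∀ k : ℕ, k < n →
      ∀ φ ∈ Set.Ioo (-(n : ℝ) / 2 + (k : ℝ)) (-(n : ℝ) / 2 + (k : ℝ) + 1),
        angOpChain (List.ofFn α) H φ =
          (-1 : ℂ) ^ n * Complex.exp (2 * (π : ℂ) * Complex.I * (φ : ℂ)) *
            angOpChain (List.ofFn β) H φ := by
  intro k hk φ hφ
  obtain ⟨m, rfl⟩ : ∃ m, n = m + 1 := ⟨n - 1, by omega⟩
  have hne := phase_ne hφ
  set L : List (ℂ × ℂ) := List.ofFn fun i : Fin m => (α i.succ, β i.succ) with hLdef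
  have hlen : L.length = m := by simp [hLdef]
  have hL : Good L := by
    intro p hp
    obtain ⟨i, rfl⟩ := (List.mem_ofFn' _ _).1 hp
    exact h i.succ
  have e1 : List.ofFn α = α 0 :: L.map Prod.fst := by
    rw [List.ofFn_succ, hLdef, List.map_ofFn]; rfl
  have e2 : List.ofFn β = β 0 :: L.map Prod.snd := by
    rw [List.ofFn_succ, hLdef, List.map_ofFn]; rfl
  have e3 : (List.ofFn fun i => hfun (α i) (β i)) = hfun (α 0) (β 0) :: hl L := by
    rw [List.ofFn_succ, hl, hLdef, List.map_ofFn]; rfl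
  have := list_version hL (p := (α 0, β 0)) (h 0) (φ := φ) (by rw [hlen]; exact hne)
  rw [hlen] at this
  rw [hH, e1, e2, e3]
  exact this
end
end

section
/- Let α = (α_1,…,α_n), β = (β_1,…,β_n) be tuples of real numbers with β_i > α_i for each i and α_i − β_{i'} ∉ ℤ for all i, i'. Let A_1,…,A_{n_A} be the distinct values among e^{2πiα_i} with multiplicities m_{A_j}, and B_1,…,B_{n_B} the distinct values among e^{2πiβ_i} with multiplicities m_{B_j}; both multiplicity totals equal n. Fix l ∈ ℤ and let V_A = V_{A,m_A,l} and V_B = V_{B,m_B,l} be the corresponding generalized Vandermonde matrices. Then for every pair (j,r) with 0 ≤ r < m_{B_j} and every φ ∈ (−n/2 + l, −n/2 + l + 1), the connection formula holds: lim_{u→0⁺} g_{B_j,r}(u + 2πiφ) = Σ_{(j',r')} (V_B · V_A^{−1})_{(j,r),(j',r')} · lim_{u→0⁻} g_{A_{j'},r'}(u + 2πiφ), where the sum runs over pairs (j',r') with 1 ≤ j' ≤ n_A, 0 ≤ r' < m_{A_{j'}}. Consequently, in the basis of local solutions at 0 the monodromy of the hypergeometric equation around ∞ is given by the matrix (V_A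 V_B^{−1} D_B^{−1} V_B V_A^{−1})^t, and in the basis of local solutions at ∞ the monodromy around 0 is given by (V_B V_A^{−1} D_A V_A V_B^{−1})^t. -/
open Complex Filter Set Finset MeasureTheory
open scoped Real Topology

noncomputable section

/-- The local solution `g_{B,r}` of the hypergeometric equation at `∞`, in the exponential
coordinate `z = e^w` (defined for `Re w > 0`). -/
def gB {n : ℕ} (α β : Fin n → ℝ) (ν' : ℝ) (r : ℕ) (w : ℂ) : ℂ :=
  ∑' l : ℕ, ((2 * (π : ℂ) * Complex.I) ^ r)⁻¹ *
    iteratedDeriv r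
      (fun t : ℂ =>
        gammaProd (fun i => (α i : ℂ)) (fun i => (β i : ℂ)) (-(l : ℂ) + t) *
          Complex.exp ((-(l : ℂ) + t) * w)) (ν' : ℂ)

/-! ### Part 1: bounds for reciprocal Gamma products -/

def gf (a b : ℝ) (s : ℂ) : ℂ :=
  (Complex.Gamma (s - a + 1))⁻¹ * (Complex.Gamma (-s + b + 1))⁻¹

lemma gf_differentiable (a b : ℝ) : Differentiable ℂ (gf a b) := by
  unfold gf
  refine Differentiable.mul ?_ ?_
  · exact Complex.differentiable_one_div_Gamma.comp
      (by fun_prop : Differentiable ℂ fun s : ℂ => s - a + 1)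
  · exact Complex.differentiable_one_div_Gamma.comp
      (by fun_prop : Differentiable ℂ fun s : ℂ => -s + b + 1)

lemma gf_neg (a b : ℝ) (s : ℂ) : gf a b s = gf (-b) (-a) (-s) := by
  unfold gf
  rw [mul_comm]
  push_cast
  congr 3 <;> ring_nf

lemma beta_bound (δ x0 : ℝ) (hδ : 0 < δ) (hx : 0 < x0) (u : ℂ) (hu : x0 ≤ u.re) :
    ‖Complex.betaIntegral u ((δ : ℂ) + 1)‖ ≤
      Real.Gamma x0 * Real.Gamma (δ + 1) / Real.Gamma (x0 + δ + 1) := by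
  have key : Complex.betaIntegral x0 ((δ : ℂ) + 1) =
      ((∫ x : ℝ in (0:ℝ)..1, x ^ (x0 - 1) * (1 - x) ^ δ : ℝ) : ℂ) := by
    rw [← intervalIntegral.integral_ofReal]
    unfold Complex.betaIntegral
    refine intervalIntegral.integral_congr fun x hx => ?_
    rw [Set.uIcc_of_le zero_le_one] at hx
    rw [Complex.ofReal_mul, Complex.ofReal_cpow hx.1, Complex.ofReal_cpow (by linarith [hx.2])]
    push_cast
    congr 2
    ring
  have hval : (∫ x : ℝ in (0:ℝ)..1, x ^ (x0 - 1) * (1 - x) ^ δ) =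
      Real.Gamma x0 * Real.Gamma (δ + 1) / Real.Gamma (x0 + δ + 1) := by
    have h := Complex.Gamma_mul_Gamma_eq_betaIntegral (s := (x0 : ℂ)) (t := (δ : ℂ) + 1)
      (by simpa using hx) (by simp; linarith)
    rw [key] at h
    have e1 : (x0 : ℂ) + ((δ : ℂ) + 1) = ((x0 + δ + 1 : ℝ) : ℂ) := by push_cast; ring
    have e2 : (δ : ℂ) + 1 = ((δ + 1 : ℝ) : ℂ) := by push_cast; ring
    rw [e1, e2, Complex.Gamma_ofReal, Complex.Gamma_ofReal, Complex.Gamma_ofReal] at h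
    have h' : Real.Gamma x0 * Real.Gamma (δ + 1) =
      Real.Gamma (x0 + δ + 1) * ∫ x : ℝ in (0:ℝ)..1, x ^ (x0 - 1) * (1 - x) ^ δ := by
      exact_mod_cast h
    rw [h', mul_div_cancel_left₀]
    exact (Real.Gamma_pos_of_pos (by linarith)).ne'
  rw [← hval]
  unfold Complex.betaIntegral
  have hint : IntervalIntegrable (fun x : ℝ => x ^ (x0 - 1) * (1 - x) ^ δ) volume 0 1 := by
    have h := Complex.betaIntegral_convergent (u := (x0 : ℂ)) (v := (δ : ℂ) + 1)
      (by simpa using hx) (by simp; linarith)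
    have h2 := h.norm
    refine h2.congr_ae ?_
    rw [Filter.EventuallyEq, ae_restrict_iff' measurableSet_uIoc]
    have h1 : ∀ᵐ x : ℝ, x ≠ 1 := by simp [ae_iff, measure_singleton]
    filter_upwards [h1] with x hx1 hx
    rw [Set.uIoc_of_le zero_le_one] at hx
    have hx1' : 0 < 1 - x := by
      have := lt_of_le_of_ne hx.2 hx1
      linarith
    rw [norm_mul, Complex.norm_cpow_eq_rpow_re_of_pos hx.1]
    have : (1 : ℂ) - (x : ℂ) = ((1 - x : ℝ) : ℂ) := by push_cast; ring
    rw [this, Complex.norm_cpow_eq_rpow_re_of_pos hx1']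
    simp
  refine intervalIntegral.norm_integral_le_of_norm_le zero_le_one ?_ hint
  have h1 : ∀ᵐ x : ℝ, x ≠ 1 := by simp [ae_iff, measure_singleton]
  filter_upwards [h1] with x hx1 hx
  have hx1' : 0 < 1 - x := by
    have := lt_of_le_of_ne hx.2 hx1
    linarith
  rw [norm_mul, Complex.norm_cpow_eq_rpow_re_of_pos hx.1]
  have : (1 : ℂ) - (x : ℂ) = ((1 - x : ℝ) : ℂ) := by push_cast; ring
  rw [this, Complex.norm_cpow_eq_rpow_re_of_pos hx1']
  simp only [Complex.sub_re, Complex.one_re, Complex.ofReal_re, add_sub_cancel_right]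
  refine mul_le_mul_of_nonneg_right ?_ (Real.rpow_nonneg hx1'.le _)
  exact Real.rpow_le_rpow_of_exponent_ge hx.1 hx.2 (by linarith)

lemma gratio_summable (δ : ℝ) (hδ : 0 < δ) :
    Summable fun l : ℕ => Real.Gamma (1 + l) / Real.Gamma (1 + l + δ + 1) := by
  have hpos : ∀ x : ℝ, 0 < x → 0 < Real.Gamma x := fun x hx => Real.Gamma_pos_of_pos hx
  have tele : ∀ l : ℕ, Real.Gamma (1 + l) / Real.Gamma (1 + l + δ + 1) =
      (1 / δ) * (Real.Gamma (1 + l) / Real.Gamma (1 + l + δ) -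
        Real.Gamma (1 + (l + 1 : ℕ)) / Real.Gamma (1 + (l + 1 : ℕ) + δ)) := by
    intro l
    have hl : (0:ℝ) ≤ l := Nat.cast_nonneg l
    have e1 : Real.Gamma (1 + (l + 1 : ℕ)) = (1 + l) * Real.Gamma (1 + l) := by
      rw [← Real.Gamma_add_one (by positivity)]; push_cast; ring_nf
    have e2 : Real.Gamma (1 + (l + 1 : ℕ) + δ) = (1 + l + δ) * Real.Gamma (1 + l + δ) := by
      rw [← Real.Gamma_add_one (by positivity)]; push_cast; ring_nf
    have e3 : Real.Gamma (1 + l + δ + 1) = (1 + l + δ) * Real.Gamma (1 + l + δ) := by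
      rw [← Real.Gamma_add_one (by positivity)]
    rw [e1, e2, e3]
    have := hpos (1 + l + δ) (by positivity)
    have h2 : (0:ℝ) < 1 + l + δ := by positivity
    field_simp
    ring
  refine summable_of_sum_range_le (c := (1 / δ) * (Real.Gamma 1 / Real.Gamma (1 + δ))) ?_ ?_
  · intro l
    have hl : (0:ℝ) ≤ l := Nat.cast_nonneg l
    exact (div_pos (hpos _ (by positivity)) (hpos _ (by positivity))).le
  · intro N
    simp_rw [tele]
    rw [← Finset.mul_sum,
      Finset.sum_range_sub' (fun l : ℕ => Real.Gamma (1 + l) / Real.Gamma (1 + l + δ)) N]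
    have : 0 ≤ Real.Gamma (1 + N) / Real.Gamma (1 + N + δ) :=
      (div_pos (hpos _ (by positivity)) (hpos _ (by positivity))).le
    have h1 : 0 < 1 / δ := by positivity
    refine mul_le_mul_of_nonneg_left ?_ h1.le
    simp only [Nat.cast_zero, add_zero]
    linarith

lemma norm_sin_le (z : ℂ) : ‖Complex.sin z‖ ≤ Real.exp |z.im| := by
  rw [Complex.sin]
  have h1 : ‖Complex.exp (-z * Complex.I)‖ ≤ Real.exp |z.im| := by
    rw [Complex.norm_exp]
    refine Real.exp_le_exp.mpr ?_
    simpa using le_abs_self z.im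
  have h2 : ‖Complex.exp (z * Complex.I)‖ ≤ Real.exp |z.im| := by
    rw [Complex.norm_exp]
    refine Real.exp_le_exp.mpr ?_
    simpa using neg_le_abs z.im
  have h3 := norm_sub_le (Complex.exp (-z * Complex.I)) (Complex.exp (z * Complex.I))
  rw [norm_div, norm_mul, Complex.norm_I]
  simp only [mul_one, Complex.norm_ofNat]
  linarith

lemma gf_right (a b : ℝ) (hab : a < b) (x0 : ℝ) (hx : 0 < x0) (s : ℂ) (hs : b + x0 ≤ s.re) :
    ‖gf a b s‖ ≤ Real.exp (π * |s.im|) *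
      (Real.Gamma x0 / Real.Gamma (x0 + (b - a) + 1)) := by
  have hre : 0 < (s - b).re := by simp; linarith
  have hX : Complex.Gamma (s - b) ≠ 0 := Complex.Gamma_ne_zero_of_re_pos hre
  have h1 := Complex.Gamma_mul_Gamma_one_sub (s - b)
  have h2 := Complex.Gamma_mul_Gamma_eq_betaIntegral (s := s - b) (t := ((b - a : ℝ) : ℂ) + 1)
    hre (by simp; linarith)
  have e1 : s - b + (((b - a : ℝ) : ℂ) + 1) = s - a + 1 := by push_cast; ring
  rw [e1] at h2
  have e2 : -s + b + 1 = 1 - (s - b) := by ring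
  have hY : Complex.Gamma (s - a + 1) ≠ 0 :=
    Complex.Gamma_ne_zero_of_re_pos (by simp; linarith)
  have hZ : Complex.Gamma (((b - a : ℝ) : ℂ) + 1) = ((Real.Gamma (b - a + 1) : ℝ) : ℂ) := by
    rw [← Complex.Gamma_ofReal]; push_cast; rfl
  have hZ0 : 0 < Real.Gamma (b - a + 1) := Real.Gamma_pos_of_pos (by linarith)
  have hi : (Complex.Gamma (1 - (s - b)))⁻¹ =
      Complex.Gamma (s - b) * (Complex.sin (π * (s - b)) / π) := by
    have : Complex.Gamma (1 - (s - b)) = (π / Complex.sin (π * (s - b))) / Complex.Gamma (s - b) := by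
      rw [← h1, mul_div_cancel_left₀ _ hX]
    rw [this, inv_div, ← inv_div (π : ℂ) (Complex.sin _), div_eq_mul_inv]
  have hgf : gf a b s = Complex.betaIntegral (s - b) (((b - a : ℝ) : ℂ) + 1) /
      (Real.Gamma (b - a + 1) : ℝ) * (Complex.sin (π * (s - b)) / π) := by
    unfold gf
    rw [e2, hi]
    have : Complex.Gamma (s - b) = Complex.Gamma (s - a + 1) *
        (Complex.betaIntegral (s - b) (((b - a : ℝ) : ℂ) + 1) / (Real.Gamma (b - a + 1) : ℝ)) := by
      rw [← mul_div_assoc, ← h2, hZ, mul_div_cancel_right₀]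
      exact_mod_cast hZ0.ne'
    rw [this]
    field_simp
  rw [hgf, norm_mul, norm_div, norm_div]
  have hb := beta_bound (b - a) x0 (by linarith) hx (s - b) (by simp; linarith)
  have hsin := norm_sin_le (π * (s - b))
  have him : ((π : ℂ) * (s - b)).im = π * s.im := by simp
  rw [him, abs_mul, abs_of_pos Real.pi_pos] at hsin
  rw [Complex.norm_of_nonneg hZ0.le, Complex.norm_of_nonneg Real.pi_pos.le, mul_comm]
  refine mul_le_mul ?_ ?_ (by positivity) (by positivity)
  · refine (div_le_self (norm_nonneg _) ?_).trans hsin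
    linarith [Real.pi_gt_three]
  · rw [div_le_iff₀ hZ0]
    refine hb.trans (le_of_eq ?_)
    ring

lemma gf_left (a b : ℝ) (hab : a < b) (x0 : ℝ) (hx : 0 < x0) (s : ℂ) (hs : s.re ≤ a - x0) :
    ‖gf a b s‖ ≤ Real.exp (π * |s.im|) *
      (Real.Gamma x0 / Real.Gamma (x0 + (b - a) + 1)) := by
  rw [gf_neg]
  have := gf_right (-b) (-a) (by linarith) x0 hx (-s) (by simp; linarith)
  simpa [abs_neg, sub_eq_add_neg, add_comm] using this

lemma gf_step (a b : ℝ) (hab : a < b) (s : ℂ) (hs : 1 ≤ |s.im|) :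
    ‖gf a b s‖ ≤ (2 + (b - a)) * ‖gf a b (s + 1)‖ := by
  have h : (b - s) * gf a b s = (s - a + 1) * gf a b (s + 1) := by
    unfold gf
    have h1 := Complex.one_div_Gamma_eq_self_mul_one_div_Gamma_add_one (s - a + 1)
    have h2 := Complex.one_div_Gamma_eq_self_mul_one_div_Gamma_add_one (-s + b)
    have e1 : s + 1 - a + 1 = s - a + 1 + 1 := by ring
    have e2 : -(s + 1) + b + 1 = -s + b := by ring
    rw [e1, e2, h1, h2]
    ring
  have hb : 1 ≤ ‖(b : ℂ) - s‖ := by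
    refine hs.trans ?_
    have := Complex.abs_im_le_norm ((b : ℂ) - s)
    simpa using this
  have hn : ‖s - a + 1‖ ≤ (2 + (b - a)) * ‖(b : ℂ) - s‖ := by
    have e : s - a + 1 = -((b : ℂ) - s) + ((b - a + 1 : ℝ) : ℂ) := by push_cast; ring
    rw [e]
    refine (norm_add_le _ _).trans ?_
    rw [norm_neg, Complex.norm_of_nonneg (by linarith)]
    nlinarith
  have hm := congrArg norm h
  rw [norm_mul, norm_mul] at hm
  have h0 := norm_nonneg (gf a b (s + 1))
  have : ‖(b : ℂ) - s‖ * ‖gf a b s‖ ≤ ‖(b : ℂ) - s‖ * ((2 + (b - a)) * ‖gf a b (s + 1)‖) := by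
    rw [hm]
    nlinarith
  exact le_of_mul_le_mul_left this (by linarith)

lemma gf_middle (a b : ℝ) (hab : a < b) (M : ℝ) :
    ∃ C : ℝ, 0 ≤ C ∧ ∀ s : ℂ, |s.re| ≤ M → ‖gf a b s‖ ≤ Real.exp (π * |s.im|) * C := by
  obtain ⟨N, hN⟩ := exists_nat_ge (b + 1 + M)
  have hstep : ∀ k : ℕ, ∀ s : ℂ, 1 ≤ |s.im| →
      ‖gf a b s‖ ≤ (2 + (b - a)) ^ k * ‖gf a b (s + k)‖ := by
    intro k
    induction k with
    | zero => intro s _; simp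
    | succ k ih =>
      intro s hs
      have h1 := ih s hs
      have h2 := gf_step a b hab (s + k) (by simpa using hs)
      have h3 : 0 ≤ (2 + (b - a)) ^ k := by
        have : 0 ≤ 2 + (b - a) := by linarith
        positivity
      calc _ ≤ _ := h1
        _ ≤ (2 + (b - a)) ^ k * ((2 + (b - a)) * ‖gf a b (s + k + 1)‖) :=
          mul_le_mul_of_nonneg_left h2 h3
        _ = _ := by rw [pow_succ]; push_cast; rw [add_assoc s]; ring
  have hK : IsCompact (Set.Icc (-M) M ×ℂ Set.Icc (-1 : ℝ) 1) :=
    isCompact_Icc.reProdIm isCompact_Icc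
  obtain ⟨C1, hC1⟩ := hK.exists_bound_of_continuousOn (gf_differentiable a b).continuous.continuousOn
  refine ⟨max 0 C1 + (2 + (b - a)) ^ N * (Real.Gamma 1 / Real.Gamma (1 + (b - a) + 1)), ?_, ?_⟩
  · have : 0 ≤ Real.Gamma (1 + (b - a) + 1) := (Real.Gamma_pos_of_pos (by linarith)).le
    have h2 : 0 ≤ 2 + (b - a) := by linarith
    have h3 : 0 ≤ max 0 C1 := le_max_left _ _
    rw [Real.Gamma_one]
    positivity
  · intro s hs
    have g0 : 0 ≤ Real.Gamma (1 + (b - a) + 1) := (Real.Gamma_pos_of_pos (by linarith)).le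
    have h2 : 0 ≤ 2 + (b - a) := by linarith
    have h3 : 0 ≤ max 0 C1 := le_max_left _ _
    have h4 : 0 ≤ (2 + (b - a)) ^ N * (Real.Gamma 1 / Real.Gamma (1 + (b - a) + 1)) := by
      rw [Real.Gamma_one]; positivity
    rcases le_total 1 |s.im| with him | him
    · have h := hstep N s him
      have hr := gf_right a b hab 1 one_pos (s + N) (by
        simp; linarith [(abs_le.mp hs).1])
      have e : (s + N).im = s.im := by simp
      rw [e] at hr
      calc _ ≤ _ := h
        _ ≤ (2 + (b - a)) ^ N * (Real.exp (π * |s.im|) *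
          (Real.Gamma 1 / Real.Gamma (1 + (b - a) + 1))) :=
            mul_le_mul_of_nonneg_left hr (by positivity)
        _ = Real.exp (π * |s.im|) * ((2 + (b - a)) ^ N * (Real.Gamma 1 / Real.Gamma (1 + (b - a) + 1))) := by ring
        _ ≤ _ := mul_le_mul_of_nonneg_left (by linarith) (Real.exp_pos _).le
    · have h := hC1 s (by
        rw [Complex.mem_reProdIm]
        exact ⟨abs_le.mp hs, abs_le.mp him⟩)
      have h1 : 1 ≤ Real.exp (π * |s.im|) := Real.one_le_exp (by positivity)
      have h5 : C1 ≤ max 0 C1 := le_max_right _ _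
      nlinarith

lemma gf_bound (a b : ℝ) (hab : a < b) (R : ℝ) :
    ∃ r : ℤ → ℝ, Summable r ∧ (∀ l, 0 ≤ r l) ∧ ∀ (l : ℤ) (t : ℂ), |t.re| ≤ R →
      ‖gf a b (t + l)‖ ≤ Real.exp (π * |t.im|) * r l := by
  obtain ⟨N, hN⟩ := exists_nat_ge (R + |a| + |b| + 1)
  obtain ⟨C, hC0, hC⟩ := gf_middle a b hab (R + N)
  let ρ : ℕ → ℝ := fun k => if k < N then C else
    Real.Gamma (1 + (k - N : ℕ)) / Real.Gamma (1 + (k - N : ℕ) + (b - a) + 1)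
  have hρs : Summable ρ := by
    rw [← summable_nat_add_iff N]
    refine (gratio_summable (b - a) (by linarith)).congr fun k => ?_
    simp [ρ]
  refine ⟨fun l => ρ l.natAbs, ?_, ?_, ?_⟩
  · refine Summable.of_nat_of_neg ?_ ?_
    · simpa using hρs
    · simpa using hρs
  · intro l
    simp only [ρ]
    split_ifs
    · exact hC0
    · exact (div_pos (Real.Gamma_pos_of_pos (by positivity))
        (Real.Gamma_pos_of_pos (by
          have : (0:ℝ) ≤ ((l.natAbs - N : ℕ) : ℝ) := Nat.cast_nonneg _
          linarith))).le
  · intro l t ht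
    have him : (t + (l : ℂ)).im = t.im := by simp
    have hre : (t + (l : ℂ)).re = t.re + l := by simp
    have ht' := abs_le.mp ht
    simp only [ρ]
    split_ifs with h
    · have := hC (t + l) (by
        rw [hre]
        refine (abs_add_le _ _).trans ?_
        have : |(l : ℝ)| ≤ N := by
          rw [← Int.cast_abs, Int.abs_eq_natAbs]
          exact_mod_cast h.le
        linarith)
      rwa [him] at this
    · push Not at h
      have hk : ((l.natAbs - N : ℕ) : ℝ) = |(l : ℝ)| - N := by
        rw [Nat.cast_sub h, Nat.cast_natAbs, Int.cast_abs]
      have hk0 : (0:ℝ) ≤ ((l.natAbs - N : ℕ) : ℝ) := Nat.cast_nonneg _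
      rcases le_total 0 l with hl | hl
      · have hl' : (0:ℝ) ≤ l := by exact_mod_cast hl
        rw [abs_of_nonneg hl'] at hk
        have := gf_right a b hab (1 + (l.natAbs - N : ℕ)) (by linarith) (t + l) (by
          rw [hre, hk]
          linarith [le_abs_self b, abs_nonneg a])
        rwa [him] at this
      · have hl' : (l:ℝ) ≤ 0 := by exact_mod_cast hl
        rw [abs_of_nonpos hl'] at hk
        have := gf_left a b hab (1 + (l.natAbs - N : ℕ)) (by linarith) (t + l) (by
          rw [hre, hk]
          linarith [neg_abs_le a, abs_nonneg b])
        rwa [him] at this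

lemma summable_fin_prod_nonneg {ι : Type*} {n : ℕ} (r : Fin (n + 1) → ι → ℝ)
    (hs : ∀ i, Summable (r i)) (h0 : ∀ i l, 0 ≤ r i l) :
    Summable fun l => ∏ i, r i l := by
  induction n with
  | zero => simpa using hs 0
  | succ n ih =>
    have h1 := ih (fun i => r i.succ) (fun i => hs _) (fun i l => h0 _ _)
    simp_rw [Fin.prod_univ_succ (n := n + 1)]
    have hb : ∀ l, r 0 l ≤ ∑' k, r 0 k := fun l => (hs 0).le_tsum l (fun j _ => h0 0 j)
    refine Summable.of_nonneg_of_le (fun l => mul_nonneg (h0 _ _)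
      (Finset.prod_nonneg fun i _ => h0 _ _)) (fun l => ?_) (h1.mul_left (∑' k, r 0 k))
    exact mul_le_mul_of_nonneg_right (hb l) (Finset.prod_nonneg fun i _ => h0 _ _)

/-- gamma product with real parameters -/
def gp {n : ℕ} (α β : Fin n → ℝ) (s : ℂ) : ℂ :=
  gammaProd (fun i => (α i : ℂ)) (fun i => (β i : ℂ)) s

lemma gp_eq {n : ℕ} (α β : Fin n → ℝ) (s : ℂ) : gp α β s = ∏ i, gf (α i) (β i) s := by
  simp [gp, gammaProd, gf, Finset.prod_mul_distrib]

lemma gp_differentiable {n : ℕ} (α β : Fin n → ℝ) : Differentiable ℂ (gp α β) := by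
  have : gp α β = fun s => ∏ i, gf (α i) (β i) s := funext (gp_eq α β)
  rw [this]
  exact Differentiable.fun_finsetProd fun i _ => gf_differentiable _ _

lemma gp_bound {n : ℕ} (hn : 1 ≤ n) (α β : Fin n → ℝ) (hab : ∀ i, α i < β i) (R : ℝ) :
    ∃ r : ℤ → ℝ, Summable r ∧ (∀ l, 0 ≤ r l) ∧ ∀ (l : ℤ) (t : ℂ), |t.re| ≤ R →
      ‖gp α β (t + l)‖ ≤ Real.exp (n * π * |t.im|) * r l := by
  choose r hs h0 hb using fun i => gf_bound (α i) (β i) (hab i) R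
  obtain ⟨m, rfl⟩ : ∃ m, n = m + 1 := ⟨n - 1, by omega⟩
  refine ⟨fun l => ∏ i, r i l, summable_fin_prod_nonneg r hs h0,
    fun l => Finset.prod_nonneg fun i _ => h0 _ _, fun l t ht => ?_⟩
  rw [gp_eq, norm_prod]
  calc _ ≤ ∏ i, (Real.exp (π * |t.im|) * r i l) :=
        Finset.prod_le_prod (fun _ _ => norm_nonneg _) (fun i _ => hb i l t ht)
    _ = _ := by
      rw [Finset.prod_mul_distrib, Finset.prod_const, Finset.card_univ, Fintype.card_fin,
        ← Real.exp_nat_mul]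
      ring_nf

/-! ### Part 2: the two-sided series -/

def TT {n : ℕ} (α β : Fin n → ℝ) (w : ℂ) (l : ℤ) (t : ℂ) : ℂ :=
  gp α β ((l : ℂ) + t) * Complex.exp (((l : ℂ) + t) * w)

lemma TT_differentiable {n : ℕ} (α β : Fin n → ℝ) (w : ℂ) (l : ℤ) :
    Differentiable ℂ (TT α β w l) := by
  unfold TT
  refine Differentiable.mul ?_ (by fun_prop)
  exact (gp_differentiable α β).comp (by fun_prop : Differentiable ℂ fun t : ℂ => (l : ℂ) + t)

lemma gA_eq {n : ℕ} (α β : Fin n → ℝ) (ν : ℝ) (r : ℕ) (w : ℂ) :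
    gA α β ν r w = ∑' l : ℕ, ((2 * (π : ℂ) * Complex.I) ^ r)⁻¹ *
      iteratedDeriv r (TT α β w (l : ℤ)) (ν : ℂ) := by
  unfold gA
  refine tsum_congr fun l => ?_
  congr 2
  

lemma gB_eq {n : ℕ} (α β : Fin n → ℝ) (ν : ℝ) (r : ℕ) (w : ℂ) :
    gB α β ν r w = ∑' l : ℕ, ((2 * (π : ℂ) * Complex.I) ^ r)⁻¹ *
      iteratedDeriv r (TT α β w (-(l : ℤ))) (ν : ℂ) := by
  unfold gB
  refine tsum_congr fun l => ?_
  congr 2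
  funext t
  simp [TT, gp]

lemma TT_bound {n : ℕ} (hn : 1 ≤ n) (α β : Fin n → ℝ) (hab : ∀ i, α i < β i) (ν : ℝ) :
    ∃ r : ℤ → ℝ, Summable r ∧ (∀ l, 0 ≤ r l) ∧ ∀ (k : ℕ) (l : ℤ) (w : ℂ), (l : ℝ) * w.re ≤ 0 →
      ‖iteratedDeriv k (TT α β w l) (ν : ℂ)‖ ≤
        k.factorial * (r l * Real.exp ((|ν| + 1) * ‖w‖)) := by
  obtain ⟨r, hs, h0, hb⟩ := gp_bound hn α β hab (|ν| + 1)
  refine ⟨fun l => Real.exp (n * π) * r l, hs.mul_left _,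
    fun l => mul_nonneg (Real.exp_pos _).le (h0 l), fun k l w hlw => ?_⟩
  have h := Complex.norm_iteratedDeriv_le_of_forall_mem_sphere_norm_le (c := (ν : ℂ)) (R := 1)
    (f := TT α β w l) (C := Real.exp (n * π) * r l * Real.exp ((|ν| + 1) * ‖w‖)) k one_pos
    (TT_differentiable α β w l).diffContOnCl ?_
  · simpa using h
  intro t ht
  have ht1 : ‖t - ν‖ = 1 := by simpa [dist_eq_norm] using ht
  have htn : ‖t‖ ≤ |ν| + 1 := by
    have := norm_add_le (t - ν) (ν : ℂ)
    rw [sub_add_cancel, ht1, Complex.norm_real, Real.norm_eq_abs] at this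
    linarith
  have hre : |t.re| ≤ |ν| + 1 := (Complex.abs_re_le_norm t).trans htn
  have him : |t.im| ≤ 1 := by
    have := Complex.abs_im_le_norm (t - ν)
    rw [ht1] at this
    simpa using this
  have hg := hb l t hre
  have e : gp α β ((l : ℂ) + t) = gp α β (t + l) := by rw [add_comm]
  rw [TT, norm_mul, e, Complex.norm_exp]
  refine mul_le_mul (hg.trans (mul_le_mul_of_nonneg_right (Real.exp_le_exp.mpr ?_) (h0 l))) 
    (Real.exp_le_exp.mpr ?_) (Real.exp_pos _).le (mul_nonneg (Real.exp_pos _).le (h0 l))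
  · have : 0 ≤ (n : ℝ) * π := by positivity
    nlinarith
  · have e1 : (((l : ℂ) + t) * w).re = l * w.re + (t * w).re := by
      rw [add_mul, Complex.add_re]; simp
    rw [e1]
    have h1 : (t * w).re ≤ ‖t‖ * ‖w‖ := by
      rw [← norm_mul]; exact Complex.re_le_norm _
    have h2 : ‖t‖ * ‖w‖ ≤ (|ν| + 1) * ‖w‖ := mul_le_mul_of_nonneg_right htn (norm_nonneg _)
    linarith

lemma TT_continuous {n : ℕ} (α β : Fin n → ℝ) (r : ℕ) (l : ℤ) (ν : ℂ) :
    Continuous fun w : ℂ => iteratedDeriv r (TT α β w l) ν := by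
  have hd : Differentiable ℂ fun t : ℂ => gp α β ((l : ℂ) + t) :=
    (gp_differentiable α β).comp (by fun_prop : Differentiable ℂ fun t : ℂ => (l : ℂ) + t)
  have : (fun w : ℂ => iteratedDeriv r (TT α β w l) ν) = fun w : ℂ =>
      Complex.exp (l * w) * ∑ i ∈ Finset.range (r + 1), (r.choose i : ℂ) *
        iteratedDeriv i (fun t : ℂ => gp α β ((l : ℂ) + t)) ν * (w ^ (r - i) * Complex.exp (w * ν)) := by
    funext w
    have e : TT α β w l = fun t => Complex.exp (l * w) *
        (gp α β ((l : ℂ) + t) * Complex.exp (w * t)) := by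
      funext t
      rw [TT, add_mul, Complex.exp_add, mul_comm t w]
      ring
    rw [e, iteratedDeriv_const_mul_field, iteratedDeriv_fun_mul]
    · simp only [iteratedDeriv_cexp_const_mul]
    · exact hd.contDiff.contDiffAt
    · exact (by fun_prop : ContDiff ℂ r fun t : ℂ => Complex.exp (w * t)).contDiffAt
  rw [this]
  fun_prop

/-- the general boundary limit -/
lemma lim_general {n : ℕ} (hn : 1 ≤ n) (α β : Fin n → ℝ) (hab : ∀ i, α i < β i) (ν : ℝ) (r : ℕ)
    (φ : ℝ) (e : ℕ → ℤ) (he : Function.Injective e) (F : Filter ℝ) (hF : F ≤ 𝓝 0)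
    (hsign : ∀ᶠ u in F, ∀ k, (e k : ℝ) * u ≤ 0) :
    Tendsto (fun u : ℝ => ∑' k : ℕ, ((2 * (π : ℂ) * Complex.I) ^ r)⁻¹ *
      iteratedDeriv r (TT α β ((u : ℂ) + 2 * (π : ℂ) * Complex.I * (φ : ℂ)) (e k)) (ν : ℂ)) F
      (𝓝 (∑' k : ℕ, ((2 * (π : ℂ) * Complex.I) ^ r)⁻¹ *
      iteratedDeriv r (TT α β (2 * (π : ℂ) * Complex.I * (φ : ℂ)) (e k)) (ν : ℂ))) := by
  obtain ⟨ρ, hs, h0, hb⟩ := TT_bound hn α β hab ν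
  set W : ℝ := 1 + ‖2 * (π : ℂ) * Complex.I * (φ : ℂ)‖ with hW
  refine tendsto_tsum_of_dominated_convergence
    (bound := fun k => ‖((2 * (π : ℂ) * Complex.I) ^ r)⁻¹‖ *
      (r.factorial * (ρ (e k) * Real.exp ((|ν| + 1) * W)))) ?_ ?_ ?_
  · exact (((hs.comp_injective he).mul_right _).mul_left _).mul_left _
  · intro k
    refine Tendsto.const_mul _ ?_
    have hc := (TT_continuous α β r (e k) (ν : ℂ)).comp
      (by fun_prop : Continuous fun u : ℝ => (u : ℂ) + 2 * (π : ℂ) * Complex.I * (φ : ℂ))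
    have := (hc.tendsto 0).mono_left hF
    simpa [Function.comp_def] using this
  · have h1 : ∀ᶠ u in F, |u| < 1 := by
      have : ∀ᶠ u : ℝ in 𝓝 0, |u| < 1 := by
        have := Metric.ball_mem_nhds (0 : ℝ) one_pos
        filter_upwards [this] with u hu
        simpa using hu
      exact hF this
    filter_upwards [h1, hsign] with u hu hu2 k
    rw [norm_mul]
    refine mul_le_mul_of_nonneg_left ?_ (norm_nonneg _)
    refine (hb r (e k) _ (by simpa using hu2 k)).trans ?_
    refine mul_le_mul_of_nonneg_left ?_ (by positivity)
    refine mul_le_mul_of_nonneg_left ?_ (h0 _)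
    refine Real.exp_le_exp.mpr (mul_le_mul_of_nonneg_left ?_ (by positivity))
    refine (norm_add_le _ _).trans ?_
    rw [hW, Complex.norm_real, Real.norm_eq_abs]
    linarith

lemma iteratedDeriv_tsum_entire {ι : Type*} (r : ℕ) : ∀ (F : ι → ℂ → ℂ)
    (_ : ∀ i, Differentiable ℂ (F i))
    (_ : ∀ R : ℝ, ∃ u : ι → ℝ, Summable u ∧ ∀ i t, ‖t‖ ≤ R → ‖F i t‖ ≤ u i) (t : ℂ),
    iteratedDeriv r (fun t => ∑' i, F i t) t = ∑' i, iteratedDeriv r (F i) t := by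
  induction r with
  | zero => intro F _ _ t; simp
  | succ r ih =>
    intro F hd hb t
    rw [iteratedDeriv_succ']
    have hder : deriv (fun t => ∑' i, F i t) = fun t => ∑' i, deriv (F i) t := by
      funext z
      obtain ⟨u, hu, hub⟩ := hb (‖z‖ + 1)
      have := Complex.hasSum_deriv_of_summable_norm (F := F) (U := Metric.ball 0 (‖z‖ + 1)) hu
        (fun i => (hd i).differentiableOn) Metric.isOpen_ball
        (fun i w hw => hub i w (by simpa using (Metric.mem_ball.mp hw).le)) (z := z) (by simp)
      exact this.tsum_eq.symm
    rw [hder, ih (fun i => deriv (F i)) (fun i => (hd i).deriv)]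
    · simp_rw [iteratedDeriv_succ']
    · intro R
      obtain ⟨u, hu, hub⟩ := hb (R + 1)
      refine ⟨u, hu, fun i t ht => ?_⟩
      have := Complex.norm_deriv_le_of_forall_mem_sphere_norm_le (c := t) (R := 1) (f := F i)
        (C := u i) one_pos (hd i).diffContOnCl (fun z hz => hub i z (by
          have h1 : ‖z - t‖ = 1 := by simpa [dist_eq_norm] using hz
          have h2 := norm_add_le (z - t) t
          rw [sub_add_cancel] at h2
          linarith))
      simpa using this

def PP {n : ℕ} (α β : Fin n → ℝ) (φ : ℝ) (t : ℂ) : ℂ :=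
  ∑' l : ℤ, TT α β (2 * (π : ℂ) * Complex.I * (φ : ℂ)) l t

lemma TT_norm {n : ℕ} (α β : Fin n → ℝ) (φ : ℝ) (l : ℤ) (t : ℂ) :
    ‖TT α β (2 * (π : ℂ) * Complex.I * (φ : ℂ)) l t‖ =
      ‖gp α β (t + l)‖ * Real.exp (-2 * π * φ * t.im) := by
  rw [TT, norm_mul, Complex.norm_exp, add_comm t]
  congr 2
  simp
  ring

lemma TT_local {n : ℕ} (hn : 1 ≤ n) (α β : Fin n → ℝ) (hab : ∀ i, α i < β i) (φ : ℝ) (R : ℝ) :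
    ∃ u : ℤ → ℝ, Summable u ∧ ∀ i t, ‖t‖ ≤ R →
      ‖TT α β (2 * (π : ℂ) * Complex.I * (φ : ℂ)) i t‖ ≤ u i := by
  obtain ⟨r, hs, h0, hb⟩ := gp_bound hn α β hab R
  refine ⟨fun l => Real.exp (n * π * R) * r l * Real.exp (2 * π * |φ| * R),
    (hs.mul_left _).mul_right _, fun l t ht => ?_⟩
  rw [TT_norm]
  have hre : |t.re| ≤ R := (Complex.abs_re_le_norm t).trans ht
  have him : |t.im| ≤ R := (Complex.abs_im_le_norm t).trans ht
  refine mul_le_mul ((hb l t hre).trans (mul_le_mul_of_nonneg_right (Real.exp_le_exp.mpr ?_) (h0 l)))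
    (Real.exp_le_exp.mpr ?_) (Real.exp_pos _).le (mul_nonneg (Real.exp_pos _).le (h0 l))
  · exact mul_le_mul_of_nonneg_left him (by positivity)
  · have h1 : -(φ * t.im) ≤ |φ| * |t.im| := by rw [← abs_mul]; exact neg_le_abs _
    have h2 : |φ| * |t.im| ≤ |φ| * R := mul_le_mul_of_nonneg_left him (abs_nonneg _)
    have h3 : 0 < 2 * π := by positivity
    nlinarith

lemma PP_differentiable {n : ℕ} (hn : 1 ≤ n) (α β : Fin n → ℝ) (hab : ∀ i, α i < β i) (φ : ℝ) :
    Differentiable ℂ (PP α β φ) := by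
  intro z
  obtain ⟨u, hu, hub⟩ := TT_local hn α β hab φ (‖z‖ + 1)
  have := Complex.differentiableOn_tsum_of_summable_norm
    (F := TT α β (2 * (π : ℂ) * Complex.I * (φ : ℂ))) (U := Metric.ball 0 (‖z‖ + 1)) hu
    (fun i => (TT_differentiable α β _ i).differentiableOn) Metric.isOpen_ball
    (fun i w hw => hub i w (by simpa using (Metric.mem_ball.mp hw).le))
  exact this.differentiableAt (Metric.isOpen_ball.mem_nhds (by simp))

lemma PP_periodic {n : ℕ} (α β : Fin n → ℝ) (φ : ℝ) : Function.Periodic (PP α β φ) 1 := by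
  intro t
  unfold PP
  rw [← (Equiv.addRight (1 : ℤ)).tsum_eq (fun l => TT α β (2 * (π : ℂ) * Complex.I * (φ : ℂ)) l t)]
  refine tsum_congr fun l => ?_
  simp only [TT, Equiv.coe_addRight]
  have : (l : ℂ) + (t + 1) = ((l + 1 : ℤ) : ℂ) + t := by push_cast; ring
  rw [this]

lemma PP_bound {n : ℕ} (hn : 1 ≤ n) (α β : Fin n → ℝ) (hab : ∀ i, α i < β i) (φ : ℝ) :
    ∃ C : ℝ, ∀ t : ℂ, ‖PP α β φ t‖ ≤ C * Real.exp (n * π * |t.im| - 2 * π * φ * t.im) := by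
  obtain ⟨r, hs, h0, hb⟩ := gp_bound hn α β hab 1
  have h1 : ∀ t : ℂ, |t.re| ≤ 1 →
      ‖PP α β φ t‖ ≤ (∑' l, r l) * Real.exp (n * π * |t.im| - 2 * π * φ * t.im) := by
    intro t ht
    rw [← tsum_mul_right]
    refine tsum_of_norm_bounded (hs.mul_right _).hasSum fun l => ?_
    rw [TT_norm, sub_eq_add_neg, Real.exp_add]
    calc _ ≤ (Real.exp (n * π * |t.im|) * r l) * Real.exp (-2 * π * φ * t.im) :=
          mul_le_mul_of_nonneg_right (hb l t ht) (Real.exp_pos _).le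
      _ = _ := by
        have : -2 * π * φ * t.im = -(2 * π * φ * t.im) := by ring
        rw [this]; ring
  refine ⟨∑' l, r l, fun t => ?_⟩
  have hp := (PP_periodic α β φ).sub_int_mul_eq ⌊t.re⌋ (x := t)
  rw [mul_one] at hp
  have h2 := h1 (t - ⌊t.re⌋) (by
    have e : (t - (⌊t.re⌋ : ℂ)).re = Int.fract t.re := by rw [← Int.self_sub_floor]; simp
    rw [e, abs_of_nonneg (Int.fract_nonneg _)]
    exact (Int.fract_lt_one _).le)
  rw [hp] at h2
  simpa using h2

/-! ### Part 3: periodic entire functions of bounded exponential type -/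

lemma entire_poly (f : ℂ → ℂ) (hf : Differentiable ℂ f) (n : ℕ) (C e : ℝ) (he : e < n + 1)
    (hb : ∀ q : ℂ, 1 ≤ ‖q‖ → ‖f q‖ ≤ C * ‖q‖ ^ e) :
    ∃ d : ℕ → ℂ, ∀ q, f q = ∑ k ∈ Finset.range (n + 1), d k * q ^ k := by
  have hz : ∀ k : ℕ, n + 1 ≤ k → iteratedDeriv k f 0 = 0 := by
    intro k hk
    have hbd : ∀ R : ℝ, 1 ≤ R → ‖iteratedDeriv k f 0‖ ≤ k.factorial * C * R ^ (-((k : ℝ) - e)) := by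
      intro R hR
      have h := Complex.norm_iteratedDeriv_le_of_forall_mem_sphere_norm_le (c := (0 : ℂ)) (R := R)
        (f := f) (C := C * R ^ e) k (by linarith) hf.diffContOnCl (fun z hz => by
          have h1 : ‖z‖ = R := by simpa using hz
          have := hb z (by linarith)
          rwa [h1] at this)
      refine h.trans (le_of_eq ?_)
      rw [neg_sub, Real.rpow_sub (by linarith), Real.rpow_natCast]
      ring
    have ht : Tendsto (fun R : ℝ => k.factorial * C * R ^ (-((k : ℝ) - e))) atTop (𝓝 0) := by
      have hk' : (n : ℝ) + 1 ≤ k := by exact_mod_cast hk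
      have := (tendsto_rpow_neg_atTop (y := (k : ℝ) - e) (by linarith)).const_mul
        ((k.factorial : ℝ) * C)
      simpa using this
    have := ge_of_tendsto ht (Filter.eventually_atTop.mpr ⟨1, hbd⟩)
    exact norm_le_zero_iff.mp this
  refine ⟨fun k => ((k.factorial : ℂ))⁻¹ * iteratedDeriv k f 0, fun q => ?_⟩
  have h := Complex.hasSum_taylorSeries_of_entire hf 0 q
  rw [← h.tsum_eq, tsum_eq_sum (s := Finset.range (n + 1))]
  · refine Finset.sum_congr rfl fun k _ => ?_
    simp only [sub_zero, smul_eq_mul]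
    ring
  · intro k hk
    rw [hz k (by simpa using hk)]
    simp

lemma laurent (P : ℂ → ℂ) (hd : Differentiable ℂ P) (hp : Function.Periodic P 1) (n : ℕ) (φ C : ℝ)
    (l : ℤ) (hφ : φ ∈ Set.Ioo (-(n : ℝ) / 2 + (l : ℝ)) (-(n : ℝ) / 2 + (l : ℝ) + 1))
    (hb : ∀ t : ℂ, ‖P t‖ ≤ C * Real.exp (n * π * |t.im| - 2 * π * φ * t.im)) :
    ∃ c : Fin n → ℂ, ∀ t, P t = ∑ k : Fin n, c k *
      Complex.exp (2 * (π : ℂ) * Complex.I * ((l - (k : ℕ) : ℤ) : ℂ) * t) := by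
  have hC : 0 ≤ C := by
    have := (norm_nonneg _).trans (hb 0)
    simpa using this
  set Q : ℂ → ℂ := fun t => P t * Complex.exp (-(2 * (π : ℂ) * Complex.I * ((l - n : ℤ) : ℂ) * t))
    with hQ
  have hQd : Differentiable ℂ Q := by
    refine hd.mul (by fun_prop)
  have hQp : Function.Periodic Q ((1 : ℝ) : ℂ) := by
    intro t
    simp only [hQ, Complex.ofReal_one]
    rw [hp t]
    congr 1
    rw [Complex.exp_eq_exp_iff_exists_int]
    exact ⟨-(l - n), by push_cast; ring⟩
  have hQn : ∀ t, ‖Q t‖ ≤ C * Real.exp (n * π * |t.im| + 2 * π * ((l : ℝ) - n - φ) * t.im) := by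
    intro t
    simp only [hQ]
    rw [norm_mul, Complex.norm_exp]
    have e : (-(2 * (π : ℂ) * Complex.I * ((l - n : ℤ) : ℂ) * t)).re = 2 * π * ((l : ℝ) - n) * t.im := by
      simp
    rw [e]
    refine (mul_le_mul_of_nonneg_right (hb t) (Real.exp_pos _).le).trans (le_of_eq ?_)
    rw [mul_assoc, ← Real.exp_add]
    ring_nf
  have hpi := Real.pi_pos
  -- decay at i∞
  have hZ : Filter.ZeroAtFilter (Filter.comap Complex.im Filter.atTop) Q := by
    unfold Filter.ZeroAtFilter
    have ht : Tendsto (fun y : ℝ => C * Real.exp (-(2 * π * (φ - (-(n : ℝ) / 2 + l))) * y)) atTop (𝓝 0) := by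
      have hc : 0 < 2 * π * (φ - (-(n : ℝ) / 2 + l)) := by
        have := hφ.1
        have h2 : 0 < φ - (-(n : ℝ) / 2 + l) := by linarith
        positivity
      have h1 : Tendsto (fun y : ℝ => Real.exp (-(2 * π * (φ - (-(n : ℝ) / 2 + l))) * y)) atTop (𝓝 0) := by
        refine Real.tendsto_exp_atBot.comp ?_
        exact Filter.tendsto_id.const_mul_atTop_of_neg (by linarith)
      simpa using h1.const_mul C
    have ht2 := ht.comp (Filter.tendsto_comap (f := Complex.im) (x := Filter.atTop))
    refine squeeze_zero_norm' ?_ ht2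
    have hev : ∀ᶠ t : ℂ in Filter.comap Complex.im Filter.atTop, 0 ≤ t.im :=
      (Filter.eventually_ge_atTop (0:ℝ)).comap _
    filter_upwards [hev] with t ht0
    refine (hQn t).trans (le_of_eq ?_)
    rw [abs_of_nonneg ht0]
    simp only [Function.comp]
    ring_nf
  set G := Function.Periodic.cuspFunction 1 Q with hG
  have hGd : Differentiable ℂ G := by
    intro q
    by_cases hq : q = 0
    · rw [hq]
      exact Function.Periodic.differentiableAt_cuspFunction_zero one_pos hQp
        (Filter.Eventually.of_forall fun z => hQd z) hZ.boundedAtFilter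
    · have := Function.Periodic.differentiableAt_cuspFunction (h := 1) one_ne_zero hQp
        (hQd (Function.Periodic.invQParam 1 q))
      rwa [Function.Periodic.qParam_right_inv one_ne_zero hq] at this
  have hG0 : G 0 = 0 := Function.Periodic.cuspFunction_zero_of_zero_at_inf one_pos hZ
  have hGQ : ∀ t, G (Function.Periodic.qParam 1 t) = Q t := fun t =>
    Function.Periodic.eq_cuspFunction one_ne_zero hQp t
  obtain ⟨d, hdG⟩ := entire_poly G hGd n C (φ + n / 2 - (l - n)) (by
    have := hφ.2
    linarith) (fun q hq => by
      have hq0 : q ≠ 0 := by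
        intro h; rw [h, norm_zero] at hq; linarith
      have hr := Function.Periodic.qParam_right_inv (h := 1) one_ne_zero hq0
      have hn := Function.Periodic.norm_qParam 1 (Function.Periodic.invQParam 1 q)
      set t := Function.Periodic.invQParam 1 q with ht
      rw [hr] at hn
      rw [← hr, hGQ, hr]
      refine (hQn t).trans (le_of_eq ?_)
      have hle : t.im ≤ 0 := by
        by_contra hlt
        push Not at hlt
        have : Real.exp (-2 * π * t.im / 1) < 1 := by
          rw [Real.exp_lt_one_iff]
          have : 0 < π * t.im := by positivity
          linarith
        linarith
      rw [hn, abs_of_nonpos hle, ← Real.exp_mul]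
      congr 2
      ring)
  have hd0 : d 0 = 0 := by
    have := hdG 0
    rw [hG0, Finset.sum_range_succ'] at this
    simpa using this.symm
  refine ⟨fun k => d (n - k), fun t => ?_⟩
  have hPt : P t = Q t * Complex.exp (2 * (π : ℂ) * Complex.I * ((l - n : ℤ) : ℂ) * t) := by
    simp only [hQ]
    rw [mul_assoc, ← Complex.exp_add]
    simp
  rw [hPt, ← hGQ, hdG, Finset.sum_range_succ', hd0, zero_mul, add_zero, Finset.sum_mul,
    Finset.sum_range, ← Equiv.sum_comp Fin.revPerm]
  refine Finset.sum_congr rfl fun k _ => ?_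
  have hk := k.2
  have e : ((Fin.revPerm k : Fin n) : ℕ) + 1 = n - k := by
    simp [Fin.val_rev]; omega
  rw [e, Function.Periodic.qParam, ← Complex.exp_nat_mul, mul_assoc, ← Complex.exp_add]
  congr 2
  rw [Nat.cast_sub hk.le]
  push_cast
  ring

/-! ### Part 4: vanishing, boundary values, monodromy -/

lemma card_le_order {ι : Type*} (f : ι → ℂ → ℂ) (z : ℂ) (hf : ∀ i, Differentiable ℂ (f i))
    (S : Finset ι) (h0 : ∀ i ∈ S, f i z = 0) :
    (S.card : ℕ∞) ≤ analyticOrderAt (∏ i ∈ S, f i) z := by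
  classical
  induction S using Finset.induction_on with
  | empty => simp
  | insert a S ha ih =>
    rw [Finset.prod_insert ha, Finset.card_insert_of_notMem ha]
    have hda : AnalyticAt ℂ (f a) z := (hf a).analyticAt z
    have hdS : AnalyticAt ℂ (∏ i ∈ S, f i) z :=
      (Differentiable.finsetProd fun i _ => hf i).analyticAt z
    rw [analyticOrderAt_mul hda hdS, add_comm]
    push_cast
    refine add_le_add ?_ (ih fun i hi => h0 i (Finset.mem_insert_of_mem hi))
    refine ENat.one_le_iff_ne_zero.mpr ?_
    exact hda.analyticOrderAt_ne_zero.mpr (h0 a (Finset.mem_insert_self _ _))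

lemma TT_vanish {n : ℕ} (α β : Fin n → ℝ) (w : ℂ) (l : ℤ) (ν : ℂ) (S : Finset (Fin n)) (r : ℕ)
    (hr : r < S.card) (h0 : ∀ i ∈ S, gf (α i) (β i) ((l : ℂ) + ν) = 0) :
    iteratedDeriv r (TT α β w l) ν = 0 := by
  classical
  let f : Fin n → ℂ → ℂ := fun i t => gf (α i) (β i) ((l : ℂ) + t)
  have hf : ∀ i, Differentiable ℂ (f i) := fun i =>
    (gf_differentiable _ _).comp (by fun_prop : Differentiable ℂ fun t : ℂ => (l : ℂ) + t)
  have e : TT α β w l = (∏ i ∈ S, f i) *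
      ((∏ i ∈ Sᶜ, f i) * fun t => Complex.exp (((l : ℂ) + t) * w)) := by
    rw [← mul_assoc, Finset.prod_mul_prod_compl]
    funext t
    simp [TT, gp_eq, f]
  have h1 := card_le_order f ν hf S h0
  have hS : AnalyticAt ℂ (∏ i ∈ S, f i) ν :=
    (Differentiable.finsetProd fun i _ => hf i).analyticAt ν
  have hG : AnalyticAt ℂ ((∏ i ∈ Sᶜ, f i) * fun t => Complex.exp (((l : ℂ) + t) * w)) ν :=
    ((Differentiable.finsetProd fun i _ => hf i).mul
      (by fun_prop : Differentiable ℂ fun t : ℂ => Complex.exp (((l : ℂ) + t) * w))).analyticAt ν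
  have h2 : (S.card : ℕ∞) ≤ analyticOrderAt (TT α β w l) ν := by
    rw [e, analyticOrderAt_mul hS hG]
    exact h1.trans le_self_add
  exact (natCast_le_analyticOrderAt_iff_iteratedDeriv_eq_zero
    ((TT_differentiable α β w l).analyticAt ν)).mp h2 r hr

/-- The sum over `e : ℕ → ℤ` that covers both kinds of local solutions. -/
def GG {n : ℕ} (α β : Fin n → ℝ) (e : ℕ → ℤ) (ν : ℝ) (r : ℕ) (w : ℂ) : ℂ :=
  ∑' k : ℕ, ((2 * (π : ℂ) * Complex.I) ^ r)⁻¹ * iteratedDeriv r (TT α β w (e k)) (ν : ℂ)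

lemma GG_boundary {n : ℕ} (hn : 1 ≤ n) (α β : Fin n → ℝ) (hab : ∀ i, α i < β i) (φ : ℝ) (l : ℤ)
    (c : Fin n → ℂ)
    (hc : ∀ t, PP α β φ t = ∑ k : Fin n, c k *
      Complex.exp (2 * (π : ℂ) * Complex.I * ((l - (k : ℕ) : ℤ) : ℂ) * t))
    (ν : ℝ) (r : ℕ) (e : ℕ → ℤ) (he : Function.Injective e) (F : Filter ℝ) (hF : F ≤ 𝓝 0)
    (hsign : ∀ᶠ u in F, ∀ k, (e k : ℝ) * u ≤ 0)
    (hvan : ∀ m : ℤ, m ∉ Set.range e →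
      iteratedDeriv r (TT α β (2 * (π : ℂ) * Complex.I * (φ : ℂ)) m) (ν : ℂ) = 0)
    (X : ℂ) (hX : Complex.exp (2 * (π : ℂ) * Complex.I * (ν : ℂ)) = X) :
    Tendsto (fun u : ℝ => GG α β e ν r ((u : ℂ) + 2 * (π : ℂ) * Complex.I * (φ : ℂ))) F
      (𝓝 (∑ k : Fin n, (((l - (k : ℕ) : ℤ) : ℂ) ^ r * X ^ (l - (k : ℕ) : ℤ)) * c k)) := by
  have h := lim_general hn α β hab ν r φ e he F hF hsign
  unfold GG
  convert h using 2
  rw [tsum_mul_left]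
  have h1 : ∑' k : ℕ, iteratedDeriv r (TT α β (2 * (π : ℂ) * Complex.I * (φ : ℂ)) (e k)) (ν : ℂ) =
      ∑' m : ℤ, iteratedDeriv r (TT α β (2 * (π : ℂ) * Complex.I * (φ : ℂ)) m) (ν : ℂ) := by
    refine he.tsum_eq (f := fun m : ℤ =>
      iteratedDeriv r (TT α β (2 * (π : ℂ) * Complex.I * (φ : ℂ)) m) (ν : ℂ)) ?_
    intro m hm
    by_contra hmr
    exact hm (hvan m hmr)
  rw [h1, ← iteratedDeriv_tsum_entire r _ (fun i => TT_differentiable α β _ i)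
    (TT_local hn α β hab φ)]
  have h2 : (fun t => ∑' i, TT α β (2 * (π : ℂ) * Complex.I * (φ : ℂ)) i t) =
      fun t => ∑ k : Fin n, c k *
        Complex.exp (2 * (π : ℂ) * Complex.I * ((l - (k : ℕ) : ℤ) : ℂ) * t) := funext hc
  rw [h2, iteratedDeriv_fun_sum]
  · rw [Finset.mul_sum]
    refine Finset.sum_congr rfl fun k _ => ?_
    rw [iteratedDeriv_const_mul_field, iteratedDeriv_cexp_const_mul, ← hX, ← Complex.exp_int_mul]
    have h3 : (2 * (π : ℂ) * Complex.I) ^ r ≠ 0 := pow_ne_zero _ Complex.two_pi_I_ne_zero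
    rw [mul_pow (2 * (π : ℂ) * Complex.I)]
    have h4 : 2 * (π : ℂ) * Complex.I * ((l - (k : ℕ) : ℤ) : ℂ) * ν =
      ((l - (k : ℕ) : ℤ) : ℂ) * (2 * (π : ℂ) * Complex.I * ν) := by ring
    simp only [h4]
    field_simp
  · intro k _
    exact (by fun_prop : ContDiff ℂ r fun t : ℂ => c k *
        Complex.exp (2 * (π : ℂ) * Complex.I * ((l - (k : ℕ) : ℤ) : ℂ) * t)).contDiffAt

lemma GG_shift {n : ℕ} (hn : 1 ≤ n) (α β : Fin n → ℝ) (hab : ∀ i, α i < β i)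
    (ν : ℝ) (r : ℕ) (e : ℕ → ℤ) (he : Function.Injective e) (w : ℂ)
    (hw : ∀ k, (e k : ℝ) * w.re ≤ 0)
    (X : ℂ) (hX : Complex.exp (2 * (π : ℂ) * Complex.I * (ν : ℂ)) = X) :
    GG α β e ν r (w + 2 * (π : ℂ) * Complex.I) =
      ∑ i ∈ Finset.range (r + 1), (r.choose i : ℂ) * X * GG α β e ν i w := by
  obtain ⟨ρ, hs, h0, hb⟩ := TT_bound hn α β hab ν
  have hsum : ∀ i : ℕ, Summable fun k : ℕ => iteratedDeriv i (TT α β w (e k)) (ν : ℂ) := by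
    intro i
    refine Summable.of_norm_bounded (g := fun k => i.factorial *
      (ρ (e k) * Real.exp ((|ν| + 1) * ‖w‖))) ?_ fun k => hb i (e k) w (hw k)
    exact ((hs.comp_injective he).mul_right _).mul_left _
  have hterm : ∀ k : ℕ, ((2 * (π : ℂ) * Complex.I) ^ r)⁻¹ *
      iteratedDeriv r (TT α β (w + 2 * (π : ℂ) * Complex.I) (e k)) (ν : ℂ) =
      ∑ i ∈ Finset.range (r + 1), (r.choose i : ℂ) * X * (((2 * (π : ℂ) * Complex.I) ^ i)⁻¹ *
        iteratedDeriv i (TT α β w (e k)) (ν : ℂ)) := by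
    intro k
    have hT : TT α β (w + 2 * (π : ℂ) * Complex.I) (e k) =
        fun t => TT α β w (e k) t * Complex.exp (2 * (π : ℂ) * Complex.I * t) := by
      funext t
      rw [TT, TT, mul_assoc (gp α β _), ← Complex.exp_add]
      congr 1
      rw [Complex.exp_eq_exp_iff_exists_int]
      exact ⟨e k, by ring⟩
    rw [hT, iteratedDeriv_fun_mul, Finset.mul_sum]
    · refine Finset.sum_congr rfl fun i hi => ?_
      have hi' : i ≤ r := Nat.lt_succ_iff.mp (Finset.mem_range.mp hi)
      simp only [iteratedDeriv_cexp_const_mul]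
      rw [hX]
      have h3 : (2 * (π : ℂ) * Complex.I) ^ i ≠ 0 := pow_ne_zero _ Complex.two_pi_I_ne_zero
      have h4 : (2 * (π : ℂ) * Complex.I) ^ (r - i) ≠ 0 := pow_ne_zero _ Complex.two_pi_I_ne_zero
      have h5 : (2 * (π : ℂ) * Complex.I) ^ r =
        (2 * (π : ℂ) * Complex.I) ^ i * (2 * (π : ℂ) * Complex.I) ^ (r - i) := by
        rw [← pow_add, Nat.add_sub_cancel' hi']
      rw [h5]
      generalize (2 * (π : ℂ) * Complex.I) ^ i = y at *
      generalize (2 * (π : ℂ) * Complex.I) ^ (r - i) = z at *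
      field_simp
    · exact (TT_differentiable α β w (e k)).contDiff.contDiffAt
    · exact (by fun_prop : ContDiff ℂ r fun t : ℂ =>
        Complex.exp (2 * (π : ℂ) * Complex.I * t)).contDiffAt
  unfold GG
  rw [tsum_congr hterm, Summable.tsum_finsetSum]
  · refine Finset.sum_congr rfl fun i _ => ?_
    rw [tsum_mul_left]
  · intro i _
    exact ((hsum i).mul_left _).mul_left _

lemma blockD_sum {N : ℕ} (m : Fin N → ℕ) (X : Fin N → ℂ)
    (D : Matrix (Σ j : Fin N, Fin (m j)) (Σ j : Fin N, Fin (m j)) ℂ)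
    (hD : ∀ p q : Σ j : Fin N, Fin (m j),
      D p q = if p.1 = q.1 ∧ (q.2 : ℕ) ≤ (p.2 : ℕ)
        then (Nat.choose (p.2 : ℕ) (q.2 : ℕ) : ℂ) * X p.1 else 0)
    (f : Fin N → ℕ → ℂ) (p : Σ j : Fin N, Fin (m j)) :
    ∑ q, D p q * f q.1 q.2 =
      ∑ i ∈ Finset.range ((p.2 : ℕ) + 1), (Nat.choose (p.2 : ℕ) i : ℂ) * X p.1 * f p.1 i := by
  obtain ⟨j, r⟩ := p
  rw [Fintype.sum_sigma, Finset.sum_eq_single j]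
  · simp only [hD, true_and]
    have h1 : ∑ x : Fin (m j), (if (x : ℕ) ≤ (r : ℕ) then
        ((r : ℕ).choose (x : ℕ) : ℂ) * X j else 0) * f j x =
        ∑ x ∈ Finset.range (m j), (if x ≤ (r : ℕ) then
        ((r : ℕ).choose x : ℂ) * X j else 0) * f j x :=
      Fin.sum_univ_eq_sum_range (fun x => (if x ≤ (r : ℕ) then
        ((r : ℕ).choose x : ℂ) * X j else 0) * f j x) (m j)
    rw [h1]
    have hsub : Finset.range ((r : ℕ) + 1) ⊆ Finset.range (m j) :=
      Finset.range_subset_range.mpr r.2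
    rw [← Finset.sum_subset hsub]
    · refine Finset.sum_congr rfl fun x hx => ?_
      rw [if_pos (Nat.lt_succ_iff.mp (Finset.mem_range.mp hx))]
    · intro x _ hx
      rw [if_neg, zero_mul]
      intro hle
      exact hx (Finset.mem_range.mpr (Nat.lt_succ_of_le hle))
  · intro j' _ hj'
    refine Finset.sum_eq_zero fun x _ => ?_
    rw [hD, if_neg, zero_mul]
    rintro ⟨h, _⟩
    exact hj' h.symm
  · simp

lemma blockD_isUnit {N : ℕ} (m : Fin N → ℕ) (X : Fin N → ℂ) (hX : ∀ j, X j ≠ 0)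
    (D : Matrix (Σ j : Fin N, Fin (m j)) (Σ j : Fin N, Fin (m j)) ℂ)
    (hD : ∀ p q : Σ j : Fin N, Fin (m j),
      D p q = if p.1 = q.1 ∧ (q.2 : ℕ) ≤ (p.2 : ℕ)
        then (Nat.choose (p.2 : ℕ) (q.2 : ℕ) : ℂ) * X p.1 else 0) :
    IsUnit D.det := by
  rw [← Matrix.isUnit_iff_isUnit_det, ← Matrix.mulVec_injective_iff_isUnit]
  rw [← Matrix.coe_mulVecLin, injective_iff_map_eq_zero]
  intro v hv
  rw [Matrix.mulVecLin_apply] at hv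
  let f : Fin N → ℕ → ℂ := fun j i => if h : i < m j then v ⟨j, ⟨i, h⟩⟩ else 0
  have hf : ∀ q : Σ j : Fin N, Fin (m j), v q = f q.1 q.2 := fun q => by simp [f]
  have key : ∀ i : ℕ, ∀ j, i < m j → f j i = 0 := by
    intro i
    induction i using Nat.strong_induction_on with
    | _ i ih =>
      intro j hij
      have h := congrFun hv ⟨j, ⟨i, hij⟩⟩
      rw [Matrix.mulVec, dotProduct] at h
      simp_rw [hf] at h
      rw [blockD_sum m X D hD f ⟨j, ⟨i, hij⟩⟩, Finset.sum_range_succ,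
        Finset.sum_eq_zero] at h
      · simpa [hX j] using h
      · intro x hx
        have hx' := Finset.mem_range.mp hx
        rw [ih x hx' j (hx'.trans hij), mul_zero]
  funext q
  rw [hf q, key q.2 q.1 q.2.2]
  rfl

lemma exp_int_diff (x y : ℝ) (h : Complex.exp (2 * (π : ℂ) * Complex.I * (x : ℂ)) =
    Complex.exp (2 * (π : ℂ) * Complex.I * (y : ℂ))) : ∃ k : ℤ, x = y + k := by
  rw [Complex.exp_eq_exp_iff_exists_int] at h
  obtain ⟨k, hk⟩ := h
  refine ⟨k, ?_⟩
  have h2 : 2 * (π : ℂ) * Complex.I * ((x : ℂ) - (y + k)) = 0 := by linear_combination hk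
  rcases mul_eq_zero.mp h2 with h3 | h3
  · exact absurd h3 Complex.two_pi_I_ne_zero
  · have : (x : ℂ) = ((y + k : ℝ) : ℂ) := by push_cast; linear_combination h3
    exact_mod_cast this

lemma gf_zero_left (a b ν : ℝ) (k m : ℤ) (hk : a = ν + k) (hk0 : 0 ≤ k) (hm : m < 0) :
    gf a b ((m : ℂ) + ν) = 0 := by
  unfold gf
  obtain ⟨N, hN⟩ := Int.eq_ofNat_of_zero_le (show 0 ≤ k - m - 1 by omega)
  have : (m : ℂ) + ν - a + 1 = -(N : ℂ) := by
    have h : ((k - m - 1 : ℤ) : ℂ) = ((N : ℤ) : ℂ) := by rw [hN]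
    rw [hk]
    push_cast at h ⊢
    linear_combination -h
  rw [this, Complex.Gamma_neg_nat_eq_zero]
  simp

lemma gf_zero_right (a b ν : ℝ) (k m : ℤ) (hk : b = ν + k) (hk0 : k ≤ 0) (hm : 0 < m) :
    gf a b ((m : ℂ) + ν) = 0 := by
  rw [gf_neg]
  have := gf_zero_left (-b) (-a) (-ν) (-k) (-m) (by rw [hk]; push_cast; ring) (by omega) (by omega)
  rw [← this]
  congr 1
  push_cast
  ring

/-- **connection formula and hypergeometric monodromy.**
With `β > α` componentwise, `α - β` non-resonant mod `ℤ`, `A`-data and `B`-data the distinct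
exponent values at `0` and `∞` with their multiplicities, `V_A = V_{A,m_A,l}`,
`V_B = V_{B,m_B,l}` the generalized Vandermonde matrices at a fixed `l ∈ ℤ` (with two-sided
inverses `W_A = V_A⁻¹`, `W_B = V_B⁻¹`), `D_A`, `D_B` the block-diagonal matrices, and
`b_A q φ` the boundary values from inside of the local solutions at `0`:
(i) the connection formula: for `φ ∈ (-n/2+l, -n/2+l+1)` the boundary value from outside of
`S_{B_j,r}` exists and equals `Σ_q (V_B V_A⁻¹)_{p,q} b_A(q,φ)`;
(ii) the continuations `G_A p = Σ_q (V_A V_B⁻¹)_{p,q} g_{B,q}` of the solutions at `0` to the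
outside satisfy, under the loop `w ↦ w - 2πi` around `∞`,
`G_A(w - 2πi) = (V_A V_B⁻¹ D_B⁻¹ V_B V_A⁻¹) G_A(w)` — i.e. in the basis of local solutions
at `0` the monodromy around `∞` is `(V_A V_B⁻¹ D_B⁻¹ V_B V_A⁻¹)^t`;
(iii) the continuations `G_B p = Σ_q (V_B V_A⁻¹)_{p,q} g_{A,q}` of the solutions at `∞` to the
inside satisfy, under the loop `w ↦ w + 2πi` around `0`,
`G_B(w + 2πi) = (V_B V_A⁻¹ D_A V_A V_B⁻¹) G_B(w)` — i.e. in the basis of local solutions at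
`∞` the monodromy around `0` is `(V_B V_A⁻¹ D_A V_A V_B⁻¹)^t`. -/
theorem hypergeometric_monodromy (n : ℕ) (hn : 1 ≤ n) (α β : Fin n → ℝ)
    (hab : ∀ i, α i < β i)
    (hres : ∀ i i' : Fin n, ∀ k : ℤ, α i - β i' ≠ (k : ℝ))
    (H : ℝ → ℂ)
    (hH : H = convList (List.ofFn fun i => hfun ((α i : ℂ)) ((β i : ℂ))))
    -- the distinct exponent values at 0 and their multiplicities
    (nA : ℕ) (A : Fin nA → ℂ) (hAinj : Function.Injective A)
    (hAval : ∀ j, ∃ i, Complex.exp (2 * (π : ℂ) * Complex.I * (α i : ℂ)) = A j)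
    (hAsurj : ∀ i, ∃ j, Complex.exp (2 * (π : ℂ) * Complex.I * (α i : ℂ)) = A j)
    (mA : Fin nA → ℕ)
    (hmA : ∀ j, mA j =
      Nat.card {i : Fin n // Complex.exp (2 * (π : ℂ) * Complex.I * (α i : ℂ)) = A j})
    (hnA : ∑ j, mA j = n)
    (ν : Fin nA → ℝ)
    (hν₁ : ∀ j, ∃ i, α i = ν j ∧ Complex.exp (2 * (π : ℂ) * Complex.I * (α i : ℂ)) = A j)
    (hν₂ : ∀ j i, Complex.exp (2 * (π : ℂ) * Complex.I * (α i : ℂ)) = A j → ν j ≤ α i)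
    -- the distinct exponent values at ∞ and their multiplicities
    (nB : ℕ) (B : Fin nB → ℂ) (hBinj : Function.Injective B)
    (hBval : ∀ j, ∃ i, Complex.exp (2 * (π : ℂ) * Complex.I * (β i : ℂ)) = B j)
    (hBsurj : ∀ i, ∃ j, Complex.exp (2 * (π : ℂ) * Complex.I * (β i : ℂ)) = B j)
    (mB : Fin nB → ℕ)
    (hmB : ∀ j, mB j =
      Nat.card {i : Fin n // Complex.exp (2 * (π : ℂ) * Complex.I * (β i : ℂ)) = B j})
    (hnB : ∑ j, mB j = n)
    (ν' : Fin nB → ℝ)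
    (hν'₁ : ∀ j, ∃ i, β i = ν' j ∧ Complex.exp (2 * (π : ℂ) * Complex.I * (β i : ℂ)) = B j)
    (hν'₂ : ∀ j i, Complex.exp (2 * (π : ℂ) * Complex.I * (β i : ℂ)) = B j → β i ≤ ν' j)
    -- the generalized Vandermonde matrices at a fixed l, with their inverses
    (l : ℤ)
    (VA : Matrix (Σ j : Fin nA, Fin (mA j)) (Fin n) ℂ)
    (hVA : ∀ (p : Σ j : Fin nA, Fin (mA j)) (k : Fin n),
      VA p k = ((l - (k : ℕ) : ℤ) : ℂ) ^ (p.2 : ℕ) * A p.1 ^ (l - (k : ℕ) : ℤ))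
    (VB : Matrix (Σ j : Fin nB, Fin (mB j)) (Fin n) ℂ)
    (hVB : ∀ (p : Σ j : Fin nB, Fin (mB j)) (k : Fin n),
      VB p k = ((l - (k : ℕ) : ℤ) : ℂ) ^ (p.2 : ℕ) * B p.1 ^ (l - (k : ℕ) : ℤ))
    (WA : Matrix (Fin n) (Σ j : Fin nA, Fin (mA j)) ℂ)
    (hWA₁ : VA * WA = 1) (hWA₂ : WA * VA = 1)
    (WB : Matrix (Fin n) (Σ j : Fin nB, Fin (mB j)) ℂ)
    (hWB₁ : VB * WB = 1) (hWB₂ : WB * VB = 1)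
    -- the block-diagonal matrices
    (DA : Matrix (Σ j : Fin nA, Fin (mA j)) (Σ j : Fin nA, Fin (mA j)) ℂ)
    (hDA : ∀ p q : Σ j : Fin nA, Fin (mA j),
      DA p q = if p.1 = q.1 ∧ (q.2 : ℕ) ≤ (p.2 : ℕ)
        then (Nat.choose (p.2 : ℕ) (q.2 : ℕ) : ℂ) * A p.1 else 0)
    (DB : Matrix (Σ j : Fin nB, Fin (mB j)) (Σ j : Fin nB, Fin (mB j)) ℂ)
    (hDB : ∀ p q : Σ j : Fin nB, Fin (mB j),
      DB p q = if p.1 = q.1 ∧ (q.2 : ℕ) ≤ (p.2 : ℕ)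
        then (Nat.choose (p.2 : ℕ) (q.2 : ℕ) : ℂ) * B p.1 else 0)
    -- the boundary values from inside of the local solutions at 0
    (bA : (Σ j : Fin nA, Fin (mA j)) → ℝ → ℂ)
    (hbA : ∀ (q : Σ j : Fin nA, Fin (mA j)) (φ : ℝ),
      Tendsto (fun u : ℝ => gA α β (ν q.1) (q.2 : ℕ)
          ((u : ℂ) + 2 * (π : ℂ) * Complex.I * (φ : ℂ)))
        (𝓝[<] 0) (𝓝 (bA q φ)))
    -- the analytic continuations of the solutions at 0 to the outside and vice versa
    (GA : (Σ j : Fin nA, Fin (mA j)) → ℂ → ℂ)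
    (hGA : ∀ p w, GA p w =
      ∑ q : Σ j : Fin nB, Fin (mB j), (VA * WB) p q * gB α β (ν' q.1) (q.2 : ℕ) w)
    (GB : (Σ j : Fin nB, Fin (mB j)) → ℂ → ℂ)
    (hGB : ∀ p w, GB p w =
      ∑ q : Σ j : Fin nA, Fin (mA j), (VB * WA) p q * gA α β (ν q.1) (q.2 : ℕ) w) :
    -- (i) the connection formula on the sector arg z/2π ∈ (-n/2+l, -n/2+l+1)
    (∀ p : Σ j : Fin nB, Fin (mB j),
      ∀ φ ∈ Set.Ioo (-(n : ℝ) / 2 + (l : ℝ)) (-(n : ℝ) / 2 + (l : ℝ) + 1),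
        Tendsto (fun u : ℝ => gB α β (ν' p.1) (p.2 : ℕ)
            ((u : ℂ) + 2 * (π : ℂ) * Complex.I * (φ : ℂ)))
          (𝓝[>] 0)
          (𝓝 (∑ q : Σ j : Fin nA, Fin (mA j), (VB * WA) p q * bA q φ))) ∧
    -- (ii) monodromy around ∞ in the basis of local solutions at 0
    (∀ p : Σ j : Fin nA, Fin (mA j), ∀ w : ℂ, 0 < w.re →
      GA p (w - 2 * (π : ℂ) * Complex.I) =
        ∑ q : Σ j : Fin nA, Fin (mA j), (VA * WB * DB⁻¹ * VB * WA) p q * GA q w) ∧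
    -- (iii) monodromy around 0 in the basis of local solutions at ∞
    (∀ p : Σ j : Fin nB, Fin (mB j), ∀ w : ℂ, w.re < 0 →
      GB p (w + 2 * (π : ℂ) * Complex.I) =
        ∑ q : Σ j : Fin nB, Fin (mB j), (VB * WA * DA * VA * WB) p q * GB q w) := by
  classical
  -- abbreviations
  have hpi : (2 * (π : ℂ) * Complex.I) ≠ 0 := Complex.two_pi_I_ne_zero
  set eA : ℕ → ℤ := fun k => (k : ℤ) with heA
  set eB : ℕ → ℤ := fun k => -(k : ℤ) with heB
  have heAi : Function.Injective eA := fun a b h => by simpa [heA] using h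
  have heBi : Function.Injective eB := fun a b h => by simpa [heB] using h
  have hgA : ∀ ν r w, gA α β ν r w = GG α β eA ν r w := fun ν r w => gA_eq α β ν r w
  have hgB : ∀ ν r w, gB α β ν r w = GG α β eB ν r w := fun ν r w => gB_eq α β ν r w
  have hXA : ∀ j, Complex.exp (2 * (π : ℂ) * Complex.I * (ν j : ℂ)) = A j := by
    intro j
    obtain ⟨i, hi, hi2⟩ := hν₁ j
    rw [← hi, hi2]
  have hXB : ∀ j, Complex.exp (2 * (π : ℂ) * Complex.I * (ν' j : ℂ)) = B j := by
    intro j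
    obtain ⟨i, hi, hi2⟩ := hν'₁ j
    rw [← hi, hi2]
  have hvanA : ∀ (q : Σ j : Fin nA, Fin (mA j)) (w : ℂ) (m : ℤ), m ∉ Set.range eA →
      iteratedDeriv (q.2 : ℕ) (TT α β w m) (ν q.1 : ℂ) = 0 := by
    intro q w m hm
    have hm0 : m < 0 := by
      by_contra h
      push Not at h
      exact hm ⟨m.toNat, by simp [heA, h]⟩
    refine TT_vanish α β w m _ (Finset.univ.filter fun i =>
      Complex.exp (2 * (π : ℂ) * Complex.I * (α i : ℂ)) = A q.1) _ ?_ ?_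
    · have h1 := q.2.2
      have h2 := hmA q.1
      rw [Nat.card_eq_fintype_card, Fintype.card_subtype] at h2
      omega
    · intro i hi
      have hi' := (Finset.mem_filter.mp hi).2
      obtain ⟨k, hk⟩ := exp_int_diff (α i) (ν q.1) (hi'.trans (hXA q.1).symm)
      have hle := hν₂ q.1 i hi'
      refine gf_zero_left _ _ _ k m hk ?_ hm0
      have : (0:ℝ) ≤ k := by linarith
      exact_mod_cast this
  have hvanB : ∀ (q : Σ j : Fin nB, Fin (mB j)) (w : ℂ) (m : ℤ), m ∉ Set.range eB →
      iteratedDeriv (q.2 : ℕ) (TT α β w m) (ν' q.1 : ℂ) = 0 := by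
    intro q w m hm
    have hm0 : 0 < m := by
      by_contra h
      push Not at h
      exact hm ⟨(-m).toNat, by simp [heB, h]⟩
    refine TT_vanish α β w m _ (Finset.univ.filter fun i =>
      Complex.exp (2 * (π : ℂ) * Complex.I * (β i : ℂ)) = B q.1) _ ?_ ?_
    · have h1 := q.2.2
      have h2 := hmB q.1
      rw [Nat.card_eq_fintype_card, Fintype.card_subtype] at h2
      omega
    · intro i hi
      have hi' := (Finset.mem_filter.mp hi).2
      obtain ⟨k, hk⟩ := exp_int_diff (β i) (ν' q.1) (hi'.trans (hXB q.1).symm)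
      have hle := hν'₂ q.1 i hi'
      refine gf_zero_right _ _ _ k m hk ?_ hm0
      have : (k:ℝ) ≤ 0 := by linarith
      exact_mod_cast this
  refine ⟨?_, ?_, ?_⟩
  · intro p φ hφ
    obtain ⟨C, hC⟩ := PP_bound hn α β hab φ
    obtain ⟨c, hc⟩ := laurent (PP α β φ) (PP_differentiable hn α β hab φ) (PP_periodic α β φ)
      n φ C l hφ hC
    have hbAv : ∀ q, bA q φ = (VA.mulVec c) q := by
      intro q
      have h1 := hbA q φ
      simp only [hgA] at h1
      have h2 := GG_boundary hn α β hab φ l c hc (ν q.1) q.2 eA heAi (𝓝[<] 0)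
        nhdsWithin_le_nhds (by
          filter_upwards [self_mem_nhdsWithin] with u hu k
          have hu' : u < 0 := hu
          have : (0:ℝ) ≤ (eA k : ℝ) := by simp [heA]
          nlinarith) (hvanA q _) (A q.1) (hXA q.1)
      rw [tendsto_nhds_unique h1 h2, Matrix.mulVec, dotProduct]
      simp only [hVA]
    have h2 := GG_boundary hn α β hab φ l c hc (ν' p.1) p.2 eB heBi (𝓝[>] 0)
        nhdsWithin_le_nhds (by
          filter_upwards [self_mem_nhdsWithin] with u hu k
          have hu' : 0 < u := hu
          have : (eB k : ℝ) ≤ 0 := by simp [heB]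
          nlinarith) (hvanB p _) (B p.1) (hXB p.1)
    simp only [hgB]
    convert h2 using 2
    have h3 : (VB * WA).mulVec (VA.mulVec c) = VB.mulVec c := by
      rw [Matrix.mulVec_mulVec, Matrix.mul_assoc, hWA₂, Matrix.mul_one]
    have h4 := congrFun h3 p
    rw [Matrix.mulVec, dotProduct, Matrix.mulVec, dotProduct] at h4
    simp only [← hbAv, hVB] at h4
    exact h4
  · intro p w hw
    let b : ℂ → (Σ j : Fin nB, Fin (mB j)) → ℂ := fun w q => gB α β (ν' q.1) (q.2 : ℕ) w
    have hsh : b w = DB.mulVec (b (w - 2 * (π : ℂ) * Complex.I)) := by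
      funext q
      have h1 := GG_shift hn α β hab (ν' q.1) q.2 eB heBi (w - 2 * (π : ℂ) * Complex.I) (fun k => by
        have e : (w - 2 * (π : ℂ) * Complex.I).re = w.re := by simp
        rw [e]
        have : (eB k : ℝ) ≤ 0 := by simp [heB]
        nlinarith) (B q.1) (hXB q.1)
      rw [sub_add_cancel] at h1
      simp only [b, hgB]
      rw [h1, Matrix.mulVec, dotProduct]
      exact (blockD_sum mB B DB hDB (fun j i => GG α β eB (ν' j) i (w - 2 * (π : ℂ) * Complex.I)) q).symm
    have hu : IsUnit DB.det := blockD_isUnit mB B (fun j => by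
      rw [← hXB j]; exact Complex.exp_ne_zero _) DB hDB
    have hsh2 : b (w - 2 * (π : ℂ) * Complex.I) = DB⁻¹.mulVec (b w) := by
      rw [hsh, Matrix.mulVec_mulVec, Matrix.nonsing_inv_mul _ hu, Matrix.one_mulVec]
    have hG : ∀ w, (fun q => GA q w) = (VA * WB).mulVec (b w) := by
      intro w
      funext q
      rw [hGA, Matrix.mulVec, dotProduct]
    have h3 : (fun q => GA q (w - 2 * (π : ℂ) * Complex.I)) =
        (VA * WB * DB⁻¹ * VB * WA).mulVec (fun q => GA q w) := by
      rw [hG, hG, hsh2, Matrix.mulVec_mulVec, Matrix.mulVec_mulVec]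
      congr 1
      calc VA * WB * DB⁻¹ = VA * WB * DB⁻¹ * (VB * ((WA * VA) * WB)) := by
            rw [hWA₂, Matrix.one_mul, hWB₁, Matrix.mul_one]
        _ = _ := by simp only [Matrix.mul_assoc]
    have h4 := congrFun h3 p
    rwa [Matrix.mulVec, dotProduct] at h4
  · intro p w hw
    let a : ℂ → (Σ j : Fin nA, Fin (mA j)) → ℂ := fun w q => gA α β (ν q.1) (q.2 : ℕ) w
    have hsh : a (w + 2 * (π : ℂ) * Complex.I) = DA.mulVec (a w) := by
      funext q
      have h1 := GG_shift hn α β hab (ν q.1) q.2 eA heAi w (fun k => by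
        have : (0:ℝ) ≤ (eA k : ℝ) := by simp [heA]
        nlinarith) (A q.1) (hXA q.1)
      simp only [a, hgA]
      rw [h1, Matrix.mulVec, dotProduct]
      exact (blockD_sum mA A DA hDA (fun j i => GG α β eA (ν j) i w) q).symm
    have hG : ∀ w, (fun q => GB q w) = (VB * WA).mulVec (a w) := by
      intro w
      funext q
      rw [hGB, Matrix.mulVec, dotProduct]
    have h3 : (fun q => GB q (w + 2 * (π : ℂ) * Complex.I)) =
        (VB * WA * DA * VA * WB).mulVec (fun q => GB q w) := by
      rw [hG, hG, hsh, Matrix.mulVec_mulVec, Matrix.mulVec_mulVec]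
      congr 1
      calc VB * WA * DA = VB * WA * DA * (VA * ((WB * VB) * WA)) := by
            rw [hWB₂, Matrix.one_mul, hWA₁, Matrix.mul_one]
        _ = _ := by simp only [Matrix.mul_assoc]
    have h4 := congrFun h3 p
    rwa [Matrix.mulVec, dotProduct] at h4
end
end
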